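/- arXiv:1706.04491 — 9 statements merged into one kernel-verified Lean document; each statement's English description precedes it below -/
import Mathlib

section
/- For all complex numbers s, t, z₁, z₂, the double series ∑_{m=0}^∞ ∑_{n=0}^∞ (s^m t^n / (m! n!)) H_{m,n}(z₁, z₂) is summable (over ℕ²) and its sum equals exp(z₁ s + z₂ t − s t). -/
/-!
Expanding `hermite2` turns the series into a triple series over `(m, n, k)` whose terms vanish
unless `k ≤ min m n`, because of the binomial coefficients. Substituting `m = a + k`, `n = b + k`,
the `(a, b, k)` term becomes `(z₁ s)^a / a! * ((z₂ t)^b / b!) * ((-s t)^k / k!)`, so the triple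
series is the product of three absolutely convergent exponential series. Summing over `k` first
gives back the double series.
-/

open Complex Finset

/-- The holomorphic Hermite polynomial in two variables. -/
noncomputable def hermite2 (m n : ℕ) (z₁ z₂ : ℂ) : ℂ :=
  ∑ k ∈ Finset.range (min m n + 1),
    (m.choose k : ℂ) * (n.choose k : ℂ) * (-1) ^ k * (Nat.factorial k : ℂ) *
      z₁ ^ (m - k) * z₂ ^ (n - k)

/-- The `k`-th term in the expansion of the `(m, n)` summand of the generating series. -/
noncomputable def hermiteTerm (s t z₁ z₂ : ℂ) (q : (ℕ × ℕ) × ℕ) : ℂ :=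
  s ^ q.1.1 * t ^ q.1.2 / ((Nat.factorial q.1.1 : ℂ) * (Nat.factorial q.1.2 : ℂ)) *
    ((q.1.1.choose q.2 : ℂ) * (q.1.2.choose q.2 : ℂ) * (-1) ^ q.2 * (Nat.factorial q.2 : ℂ) *
      z₁ ^ (q.1.1 - q.2) * z₂ ^ (q.1.2 - q.2))

lemma hermiteTerm_eq_zero (s t z₁ z₂ : ℂ) (p : ℕ × ℕ) (k : ℕ) (h : min p.1 p.2 < k) :
    hermiteTerm s t z₁ z₂ (p, k) = 0 := by
  rcases min_lt_iff.1 h with h | h <;> simp [hermiteTerm, Nat.choose_eq_zero_of_lt h]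

lemma hermiteTerm_shift (s t z₁ z₂ : ℂ) (a b k : ℕ) :
    hermiteTerm s t z₁ z₂ ((a + k, b + k), k) =
      (z₁ * s) ^ a / (Nat.factorial a : ℂ) * ((z₂ * t) ^ b / (Nat.factorial b : ℂ)) *
        ((-(s * t)) ^ k / (Nat.factorial k : ℂ)) := by
  have fact_ne (n : ℕ) : (Nat.factorial n : ℂ) ≠ 0 := by exact_mod_cast n.factorial_ne_zero
  have ha := fact_ne a
  have hb := fact_ne b
  have hk := fact_ne k
  have hak := fact_ne (a + k)
  have hbk := fact_ne (b + k)
  simp only [hermiteTerm, Nat.add_sub_cancel]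
  rw [Nat.cast_choose ℂ (Nat.le_add_left k a), Nat.cast_choose ℂ (Nat.le_add_left k b),
    Nat.add_sub_cancel, Nat.add_sub_cancel, neg_pow (s * t)]
  field_simp
  ring

lemma hasSum_exp_series (x : ℂ) :
    HasSum (fun n : ℕ => x ^ n / (Nat.factorial n : ℂ)) (Complex.exp x) := by
  rw [Complex.exp_eq_exp_ℂ]
  exact NormedSpace.expSeries_div_hasSum_exp x

lemma hasSum_mul_complex {ι κ : Type*} {f : ι → ℂ} {g : κ → ℂ} {x y : ℂ}
    (hf : HasSum f x) (hg : HasSum g y) :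
    HasSum (fun p : ι × κ => f p.1 * g p.2) (x * y) := by
  have hfg : Summable fun p : ι × κ => f p.1 * g p.2 :=
    summable_mul_of_summable_norm (summable_norm_iff.2 hf.summable)
      (summable_norm_iff.2 hg.summable)
  exact HasSum.mul hf hg hfg

lemma hasSum_triple_mul {f g h : ℕ → ℂ} {x y w : ℂ}
    (hf : HasSum f x) (hg : HasSum g y) (hh : HasSum h w) :
    HasSum (fun q : (ℕ × ℕ) × ℕ => f q.1.1 * g q.1.2 * h q.2) (x * y * w) := by
  have hfg := hasSum_mul_complex hf hg
  exact hasSum_mul_complex (f := fun p : ℕ × ℕ => f p.1 * g p.2) (g := h) hfg hh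

lemma hasSum_hermiteTerm (s t z₁ z₂ : ℂ) :
    HasSum (hermiteTerm s t z₁ z₂) (Complex.exp (z₁ * s + z₂ * t - s * t)) := by
  rw [sub_eq_add_neg, Complex.exp_add, Complex.exp_add]
  let φ : (ℕ × ℕ) × ℕ → (ℕ × ℕ) × ℕ := fun q => ((q.1.1 + q.2, q.1.2 + q.2), q.2)
  have hφ : Function.Injective φ := by
    rintro ⟨⟨a, b⟩, k⟩ ⟨⟨a', b'⟩, k'⟩ h
    simp only [φ, Prod.mk.injEq] at h ⊢
    omega
  -- The range of `φ` is `{k ≤ min m n}`, outside which the terms vanish.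
  refine (hφ.hasSum_iff ?_).1 ?_
  · rintro ⟨⟨m, n⟩, k⟩ hq
    refine hermiteTerm_eq_zero s t z₁ z₂ (m, n) k (not_le.1 fun hk => hq ?_)
    obtain ⟨hm, hn⟩ := le_min_iff.1 hk
    exact ⟨((m - k, n - k), k), by simp [φ, Nat.sub_add_cancel hm, Nat.sub_add_cancel hn]⟩
  · convert hasSum_triple_mul (hasSum_exp_series (z₁ * s)) (hasSum_exp_series (z₂ * t))
      (hasSum_exp_series (-(s * t))) using 1
    funext q
    exact hermiteTerm_shift s t z₁ z₂ q.1.1 q.1.2 q.2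

theorem generating_function (s t z₁ z₂ : ℂ) :
    HasSum
      (fun p : ℕ × ℕ =>
        s ^ p.1 * t ^ p.2 / ((Nat.factorial p.1 : ℂ) * (Nat.factorial p.2 : ℂ)) *
          hermite2 p.1 p.2 z₁ z₂)
      (Complex.exp (z₁ * s + z₂ * t - s * t)) := by
  refine (hasSum_hermiteTerm s t z₁ z₂).prod_fiberwise fun p => ?_
  rw [hermite2, Finset.mul_sum]
  refine hasSum_sum_of_ne_finset_zero fun k hk => hermiteTerm_eq_zero s t z₁ z₂ p k ?_
  exact Nat.lt_of_succ_le (not_lt.1 (mt Finset.mem_range.2 hk))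
end

section
/- For all nonnegative integers m, n and all z₁, z₂ ∈ ℂ, the Rodrigues formula holds: H_{m,n}(z₁, z₂) = (−1)^{m+n} e^{z₁ z₂} · (∂/∂z₁)^n (∂/∂z₂)^m e^{−z₁ z₂}, where the partial derivatives are iterated complex derivatives of the entire function (z₁,z₂) ↦ e^{−z₁ z₂}. -/
/-!
Differentiating `m` times in the second variable gives
`(-1) ^ m * (w₁ ^ m * exp (-(w₁ * z₂)))`. The Leibniz rule then expands the `n`-th derivative of this
product: differentiating `w₁ ^ m` exactly `k` times gives `m.descFactorial k * w₁ ^ (m - k)`, where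
`m.descFactorial k = k ! * m.choose k`, and differentiating the exponential `n - k` times gives
`(-z₂) ^ (n - k) * exp (-(w₁ * z₂))`. The terms with `k > m` vanish, so the Leibniz sum over `k ≤ n`
is the sum over `k ≤ min m n` in the definition of `hermite2`.
-/

open Complex Finset

theorem iteratedDeriv_exp_neg_mul (m : ℕ) (w z : ℂ) :
    iteratedDeriv m (fun x => Complex.exp (-(w * x))) z = (-w) ^ m * Complex.exp (-(w * z)) := by
  simpa only [neg_mul] using congrFun (iteratedDeriv_cexp_const_mul m (-w)) z

theorem hermite2_eq_sum_range (m n : ℕ) (z₁ z₂ : ℂ) :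
    hermite2 m n z₁ z₂ = ∑ k ∈ Finset.range (n + 1),
      (m.choose k : ℂ) * (n.choose k : ℂ) * (-1) ^ k * (Nat.factorial k : ℂ) *
        z₁ ^ (m - k) * z₂ ^ (n - k) := by
  unfold hermite2
  apply Finset.sum_subset
  · intro k hk
    simp only [Finset.mem_range] at *
    omega
  · intro k hk hk'
    simp only [Finset.mem_range] at *
    rw [Nat.choose_eq_zero_of_lt (show m < k by omega)]
    simp

theorem rodrigues_formula (m n : ℕ) (z₁ z₂ : ℂ) :
    hermite2 m n z₁ z₂ =
      (-1 : ℂ) ^ (m + n) * Complex.exp (z₁ * z₂) *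
        iteratedDeriv n
          (fun w₁ => iteratedDeriv m (fun w₂ => Complex.exp (-(w₁ * w₂))) z₂) z₁ := by
  have h1 : (fun w₁ => iteratedDeriv m (fun w₂ => Complex.exp (-(w₁ * w₂))) z₂) =
      fun w₁ => (-1 : ℂ) ^ m * (w₁ ^ m * Complex.exp (-(z₂ * w₁))) := by
    funext w
    rw [iteratedDeriv_exp_neg_mul, neg_pow, mul_comm z₂ w, mul_assoc]
  have hexp : Complex.exp (z₁ * z₂) * Complex.exp (-(z₂ * z₁)) = 1 := by
    rw [← Complex.exp_add, mul_comm z₂ z₁, add_neg_cancel, Complex.exp_zero]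
  rw [h1, iteratedDeriv_const_mul_field, iteratedDeriv_fun_mul (by fun_prop) (by fun_prop),
    hermite2_eq_sum_range, Finset.mul_sum, Finset.mul_sum]
  refine Finset.sum_congr rfl fun k hk => ?_
  obtain ⟨j, rfl⟩ := Nat.exists_eq_add_of_le (Nat.lt_succ_iff.mp (Finset.mem_range.mp hk))
  rw [iteratedDeriv_exp_neg_mul, iteratedDeriv_pow, Nat.descFactorial_eq_factorial_mul_choose,
    Nat.add_sub_cancel_left, neg_pow z₂]
  have hm : (-1 : ℂ) ^ m * (-1) ^ m = 1 := by rw [← mul_pow]; simp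
  have hj : (-1 : ℂ) ^ j * (-1) ^ j = 1 := by rw [← mul_pow]; simp
  push_cast
  -- The sign is `(-1) ^ (m + (k + j)) * (-1) ^ m * (-1) ^ j = (-1) ^ k`.
  calc _ = (m.choose k : ℂ) * ((k + j).choose k : ℂ) * (-1) ^ k * (Nat.factorial k : ℂ) *
        z₁ ^ (m - k) * z₂ ^ j * ((-1) ^ m * (-1) ^ m) * ((-1) ^ j * (-1) ^ j) *
          (Complex.exp (z₁ * z₂) * Complex.exp (-(z₂ * z₁))) := by
        rw [hm, hj, hexp]; ring
    _ = _ := by rw [pow_add, pow_add]; ring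
end

section
/- For every nonnegative integer n and all s, z₁, z₂ ∈ ℂ, the series ∑_{m=0}^∞ (s^m/m!) H_{m,n}(z₁, z₂) converges to (z₂ − s)^n e^{z₁ s}; symmetrically, for every nonnegative integer m and all t, z₁, z₂ ∈ ℂ, the series ∑_{n=0}^∞ (t^n/n!) H_{m,n}(z₁, z₂) converges to (z₁ − t)^m e^{z₂ t}. -/
/-!
For fixed `n` the sum defining `hermite2 m n` may be taken over all `k ≤ n`, since the extra terms
contain `m.choose k = 0`. Hence the generating series in `m` is a finite linear combination of the
series `∑ₘ sᵐ / m! * (m.choose k * k! * z₁ ^ (m - k))`, each of which is `s ^ k` times the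
exponential series of `z₁ * s`, shifted by `k` places. The remaining finite sum over `k` is the
binomial expansion of `(z₂ - s) ^ n`. The other series follows from the symmetry
`hermite2 m n z₁ z₂ = hermite2 n m z₂ z₁`.
-/

open Complex Finset

theorem hermite2_symm (m n : ℕ) (z₁ z₂ : ℂ) : hermite2 m n z₁ z₂ = hermite2 n m z₂ z₁ := by
  unfold hermite2
  rw [min_comm]
  exact Finset.sum_congr rfl fun k _ => by ring

/-- Term by term, this is the exponential series of `z * s` differentiated `k` times in `z`. -/
theorem hasSum_choose_mul_exp (k : ℕ) (s z : ℂ) :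
    HasSum (fun m : ℕ => s ^ m / (Nat.factorial m : ℂ) *
      ((m.choose k : ℂ) * (Nat.factorial k : ℂ) * z ^ (m - k))) (s ^ k * Complex.exp (z * s)) := by
  have hexp : HasSum (fun j : ℕ => (z * s) ^ j / (Nat.factorial j : ℂ)) (Complex.exp (z * s)) := by
    rw [Complex.exp_eq_exp_ℂ]
    exact NormedSpace.expSeries_div_hasSum_exp (z * s)
  -- The terms with `m < k` vanish, so it suffices to sum along `m = j + k`.
  rw [← (add_left_injective k).hasSum_iff]
  · refine (hexp.mul_left (s ^ k)).congr_fun fun j => ?_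
    have hfac : ((j + k).choose k : ℂ) * (Nat.factorial j : ℂ) * (Nat.factorial k : ℂ)
        = (Nat.factorial (j + k) : ℂ) := by
      exact_mod_cast Nat.add_choose_mul_factorial_mul_factorial j k
    have hj : (Nat.factorial j : ℂ) ≠ 0 := by exact_mod_cast Nat.factorial_ne_zero j
    have hjk : (Nat.factorial (j + k) : ℂ) ≠ 0 := by
      exact_mod_cast Nat.factorial_ne_zero (j + k)
    simp only [Function.comp_apply, Nat.add_sub_cancel]
    rw [div_mul_eq_mul_div, mul_div_assoc', div_eq_div_iff hjk hj, ← hfac]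
    ring
  · intro m hm
    have : m < k := by
      by_contra h
      exact hm ⟨m - k, by simp only; omega⟩
    simp [Nat.choose_eq_zero_of_lt this]

theorem hasSum_hermite2_left (n : ℕ) (s z₁ z₂ : ℂ) :
    HasSum (fun m : ℕ => s ^ m / (Nat.factorial m : ℂ) * hermite2 m n z₁ z₂)
      ((z₂ - s) ^ n * Complex.exp (z₁ * s)) := by
  have h := hasSum_sum (s := Finset.range (n + 1)) fun k _ =>
    (hasSum_choose_mul_exp k s z₁).mul_left ((n.choose k : ℂ) * (-1) ^ k * z₂ ^ (n - k))
  have hval : (z₂ - s) ^ n * Complex.exp (z₁ * s) = ∑ k ∈ Finset.range (n + 1),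
      (n.choose k : ℂ) * (-1) ^ k * z₂ ^ (n - k) * (s ^ k * Complex.exp (z₁ * s)) := by
    rw [show z₂ - s = -s + z₂ by ring, add_pow, Finset.sum_mul]
    refine Finset.sum_congr rfl fun k _ => ?_
    rw [neg_pow s k]
    ring
  rw [hval]
  refine h.congr_fun fun m => ?_
  rw [hermite2_eq_sum_range, Finset.mul_sum]
  exact Finset.sum_congr rfl fun k _ => by ring

theorem partial_generating_functions :
    (∀ (n : ℕ) (s z₁ z₂ : ℂ),
      HasSum (fun m : ℕ => s ^ m / (Nat.factorial m : ℂ) * hermite2 m n z₁ z₂)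
        ((z₂ - s) ^ n * Complex.exp (z₁ * s))) ∧
    (∀ (m : ℕ) (t z₁ z₂ : ℂ),
      HasSum (fun n : ℕ => t ^ n / (Nat.factorial n : ℂ) * hermite2 m n z₁ z₂)
        ((z₁ - t) ^ m * Complex.exp (z₂ * t))) := by
  refine ⟨hasSum_hermite2_left, fun m t z₁ z₂ => ?_⟩
  simp only [hermite2_symm m]
  exact hasSum_hermite2_left m t z₂ z₁
end

section
/- For all nonnegative integers m, n and all z₁, z₂ ∈ ℂ, the lowering formulae hold: ∂H_{m,n}/∂z₂ (z₁, z₂) = n H_{m,n−1}(z₁, z₂) when n ≥ 1, and ∂H_{m,n}/∂z₁ (z₁, z₂) = m H_{m−1,n}(z₁, z₂) when m ≥ 1, where the partial derivatives are complex derivatives in the indicated variable with the other variable held fixed. -/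
/-!
Since `n.choose k` and `m.choose k` vanish past the minimum of `m` and `n`, the sum defining
`hermite2 m n` may be taken over `k ≤ m`, a range that does not depend on `n`. Differentiating in
`z₂` is then termwise, and each term matches because `(n - k) * n.choose k = n * (n - 1).choose k`.
The formula in `z₁` follows from the symmetry `H_{m,n}(z₁, z₂) = H_{n,m}(z₂, z₁)`.
-/

open Complex Finset

theorem hermite2_eq_sum_range_left (m n : ℕ) (z₁ z₂ : ℂ) :
    hermite2 m n z₁ z₂ = ∑ k ∈ Finset.range (m + 1),
      (m.choose k : ℂ) * (n.choose k : ℂ) * (-1) ^ k * (Nat.factorial k : ℂ) *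
        z₁ ^ (m - k) * z₂ ^ (n - k) := by
  unfold hermite2
  apply Finset.sum_subset
  · intro k hk
    simp only [Finset.mem_range] at *
    omega
  · intro k hk hk'
    simp only [Finset.mem_range] at *
    rw [Nat.choose_eq_zero_of_lt (show n < k by omega)]
    simp

theorem hasDerivAt_hermite2_right (m n : ℕ) (z₁ z₂ : ℂ) :
    HasDerivAt (fun w => hermite2 m (n + 1) z₁ w) (((n + 1 : ℕ) : ℂ) * hermite2 m n z₁ z₂) z₂ := by
  simp only [hermite2_eq_sum_range_left, Finset.mul_sum]
  refine HasDerivAt.fun_sum fun k _ => ?_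
  refine ((hasDerivAt_pow (n + 1 - k) z₂).const_mul _).congr_deriv ?_
  have h : (n.choose k : ℂ) * ((n + 1 : ℕ) : ℂ)
      = ((n + 1).choose k : ℂ) * ((n + 1 - k : ℕ) : ℂ) := by
    exact_mod_cast Nat.choose_mul_succ_eq n k
  -- The exponents agree even for `k > n`, where both truncated differences are zero.
  rw [show n + 1 - k - 1 = n - k by omega]
  linear_combination
    (-((m.choose k : ℂ) * (-1) ^ k * (Nat.factorial k : ℂ) * z₁ ^ (m - k) * z₂ ^ (n - k))) * h

theorem lowering_formulae (m n : ℕ) (z₁ z₂ : ℂ) :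
    (1 ≤ n →
      deriv (fun w => hermite2 m n z₁ w) z₂ = (n : ℂ) * hermite2 m (n - 1) z₁ z₂) ∧
    (1 ≤ m →
      deriv (fun w => hermite2 m n w z₂) z₁ = (m : ℂ) * hermite2 (m - 1) n z₁ z₂) := by
  constructor
  · intro hn
    obtain ⟨n, rfl⟩ := Nat.exists_eq_add_of_le' hn
    exact (hasDerivAt_hermite2_right m n z₁ z₂).deriv
  · intro hm
    obtain ⟨m, rfl⟩ := Nat.exists_eq_add_of_le' hm
    simp only [fun w => hermite2_symm (m + 1) n w z₂, hermite2_symm (m + 1 - 1) n z₁ z₂]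
    exact (hasDerivAt_hermite2_right n m z₂ z₁).deriv
end

section
/- For all nonnegative integers m, n and all z₁, z₂ ∈ ℂ, H_{m,n}(z₁, z₂) = 2^{−(m+n)} ∑_{k=0}^m ∑_{l=0}^n (m choose k)(n choose l) i^{m−k} (−i)^{n−l} H_{k+l}((z₁+z₂)/2) · H_{m+n−k−l}((z₁−z₂)/(2i)), where H_j is the j-th physicists' Hermite polynomial evaluated at a complex argument. -/
/-!
The identity is umbral. Put `x = (z₁ + z₂) / 2` and `y = (z₁ - z₂) / (2i)`, and let `φ` be the
linear functional on `ℂ[a, b]` with `φ (a ^ i * b ^ j) = H_i(x) * H_j(y)` (`umbral`). By the binomial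
theorem the right-hand side is `φ (A ^ m * B ^ n)`, where `A = (a + i b) / 2` and
`B = (a - i b) / 2`.

The three-term recurrence of the Hermite polynomials says `φ (a P) = 2 x φ(P) - 2 φ(∂P/∂a)`, and
similarly for `b`. Hence `φ (A P) = z₁ φ(P) - φ (D P)` with `D = ∂/∂a + i ∂/∂b`, and since `D A = 0`
and `D B = 1`, this gives `φ (A^(m+1) B^n) = z₁ φ (A^m B^n) - n φ (A^m B^(n-1))`; likewise
`φ (B^(n+1)) = z₂ φ (B^n)`. The polynomials `H_{m,n}` satisfy the same recurrence with the same
initial values.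
-/

open Complex Finset

/-- The `j`-th physicists' Hermite polynomial, evaluated at a complex argument:
`H_j(x) = j! ∑_{r=0}^{⌊j/2⌋} (-1)^r (2x)^{j-2r} / (r! (j-2r)!)`. -/
noncomputable def hermitePhys (j : ℕ) (x : ℂ) : ℂ :=
  ∑ r ∈ Finset.range (j / 2 + 1),
    (Nat.factorial j : ℂ) * (-1) ^ r * (2 * x) ^ (j - 2 * r) /
      ((Nat.factorial r : ℂ) * (Nat.factorial (j - 2 * r) : ℂ))

/-! ### Three-term recurrence for the one-variable polynomials -/

/-- The `r`-th term of `hermitePhys j x`, extended by zero beyond `r = j / 2`. -/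
noncomputable def physTerm (x : ℂ) (j r : ℕ) : ℂ :=
  if 2 * r ≤ j then
    (Nat.factorial j : ℂ) * (-1) ^ r * (2 * x) ^ (j - 2 * r) /
      ((Nat.factorial r : ℂ) * (Nat.factorial (j - 2 * r) : ℂ))
  else 0

lemma hermitePhys_eq_sum (x : ℂ) (j N : ℕ) (h : j / 2 + 1 ≤ N) :
    hermitePhys j x = ∑ r ∈ Finset.range N, physTerm x j r := by
  unfold hermitePhys
  rw [← Finset.sum_subset (Finset.range_mono h)]
  · refine Finset.sum_congr rfl fun r hr => ?_
    rw [Finset.mem_range] at hr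
    rw [physTerm, if_pos (by omega)]
  · intro r _ hr
    rw [Finset.mem_range] at hr
    rw [physTerm, if_neg (by omega)]

lemma physTerm_zero (x : ℂ) (j : ℕ) : physTerm x j 0 = (2 * x) ^ j := by
  have : (Nat.factorial j : ℂ) ≠ 0 := by exact_mod_cast Nat.factorial_ne_zero j
  simp [physTerm]
  field_simp

lemma physTerm_succ (x : ℂ) (j r : ℕ) :
    physTerm x (j + 2) (r + 1) =
      2 * x * physTerm x (j + 1) (r + 1) - 2 * (j + 1) * physTerm x j r := by
  have hr : (Nat.factorial r : ℂ) ≠ 0 := by exact_mod_cast Nat.factorial_ne_zero r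
  have hr1 : (r : ℂ) + 1 ≠ 0 := by exact_mod_cast Nat.succ_ne_zero r
  by_cases h : 2 * r ≤ j
  · obtain ⟨e, rfl⟩ := Nat.exists_eq_add_of_le h
    rcases e with _ | e
    · rw [physTerm, physTerm, physTerm, if_pos (by omega), if_neg (by omega), if_pos (by omega)]
      rw [show 2 * r + 0 + 2 - 2 * (r + 1) = 0 by omega, show 2 * r + 0 - 2 * r = 0 by omega]
      simp only [Nat.factorial_succ, add_zero]
      push_cast
      simp
      field_simp
      ring
    · have he : (Nat.factorial e : ℂ) ≠ 0 := by exact_mod_cast Nat.factorial_ne_zero e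
      have he1 : (e : ℂ) + 1 ≠ 0 := by exact_mod_cast Nat.succ_ne_zero e
      rw [physTerm, physTerm, physTerm, if_pos (by omega), if_pos (by omega), if_pos (by omega)]
      rw [show 2 * r + (e + 1) + 2 - 2 * (r + 1) = e + 1 by omega,
        show 2 * r + (e + 1) - 2 * r = e + 1 by omega,
        show 2 * r + (e + 1) + 1 - 2 * (r + 1) = e by omega]
      rw [Nat.factorial_succ (2 * r + (e + 1) + 1), Nat.factorial_succ (2 * r + (e + 1)),
        Nat.factorial_succ r, Nat.factorial_succ e]
      push_cast
      field_simp
      ring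
  · rw [physTerm, physTerm, physTerm, if_neg (by omega), if_neg (by omega), if_neg (by omega)]
    ring

lemma hermitePhys_add_two (x : ℂ) (j : ℕ) :
    hermitePhys (j + 2) x = 2 * x * hermitePhys (j + 1) x - 2 * (j + 1) * hermitePhys j x := by
  rw [hermitePhys_eq_sum x (j + 2) (j + 3) (by omega),
    hermitePhys_eq_sum x (j + 1) (j + 3) (by omega),
    hermitePhys_eq_sum x j (j + 2) (by omega), Finset.sum_range_succ', Finset.sum_range_succ' _ (j + 2)]
  simp only [physTerm_succ, physTerm_zero, Finset.sum_sub_distrib, ← Finset.mul_sum]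
  ring

lemma hermitePhys_zero (x : ℂ) : hermitePhys 0 x = 1 := by simp [hermitePhys]

lemma hermitePhys_one (x : ℂ) : hermitePhys 1 x = 2 * x := by simp [hermitePhys]

/-- The three-term recurrence, with the truncated index `j - 1` harmless because of the factor `j`. -/
lemma hermitePhys_succ (x : ℂ) (j : ℕ) :
    hermitePhys (j + 1) x = 2 * x * hermitePhys j x - 2 * (j * hermitePhys (j - 1) x) := by
  rcases j with _ | j
  · simp [hermitePhys_zero, hermitePhys_one]
  · rw [hermitePhys_add_two]
    push_cast
    ring

/-! ### Recurrence for the two-variable polynomials -/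

/-- Extending the defining sum is harmless, since the binomial coefficients vanish. -/
lemma hermite2_eq_sum (m n N : ℕ) (z₁ z₂ : ℂ) (h : min m n + 1 ≤ N) :
    hermite2 m n z₁ z₂ = ∑ k ∈ Finset.range N,
      (m.choose k : ℂ) * (n.choose k : ℂ) * (-1) ^ k * (Nat.factorial k : ℂ) *
      z₁ ^ (m - k) * z₂ ^ (n - k) := by
  unfold hermite2
  refine Finset.sum_subset (Finset.range_mono h) fun k _ hk => ?_
  rw [Finset.mem_range] at hk
  rcases le_total m n with hmn | hmn
  · rw [min_eq_left hmn] at hk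
    simp [Nat.choose_eq_zero_of_lt (show m < k by omega)]
  · rw [min_eq_right hmn] at hk
    simp [Nat.choose_eq_zero_of_lt (show n < k by omega)]

lemma hermite2_zero_left (n : ℕ) (z₁ z₂ : ℂ) : hermite2 0 n z₁ z₂ = z₂ ^ n := by
  simp [hermite2]

lemma hermite2_zero_right (m : ℕ) (z₁ z₂ : ℂ) : hermite2 m 0 z₁ z₂ = z₁ ^ m := by
  simp [hermite2]

lemma hermite2_succ_succ (m n : ℕ) (z₁ z₂ : ℂ) :
    hermite2 (m + 1) (n + 1) z₁ z₂ =
      z₁ * hermite2 m (n + 1) z₁ z₂ - (n + 1) * hermite2 m n z₁ z₂ := by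
  rw [hermite2_eq_sum (m + 1) (n + 1) (m + 2) z₁ z₂ (by omega),
    hermite2_eq_sum m (n + 1) (m + 2) z₁ z₂ (by omega),
    hermite2_eq_sum m n (m + 1) z₁ z₂ (by omega),
    Finset.sum_range_succ', Finset.sum_range_succ' _ (m + 1), mul_add, add_sub_right_comm,
    Finset.mul_sum, Finset.mul_sum, ← Finset.sum_sub_distrib]
  congr 1
  · refine Finset.sum_congr rfl fun k _ => ?_
    have hn : ((n : ℂ) + 1) * n.choose k = (n + 1).choose (k + 1) * (k + 1) := by
      exact_mod_cast Nat.add_one_mul_choose_eq n k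
    have hz : (m.choose (k + 1) : ℂ) * z₁ ^ (m - k) =
        m.choose (k + 1) * (z₁ * z₁ ^ (m - (k + 1))) := by
      rcases Nat.lt_or_ge k m with h | h
      · rw [← pow_succ', show m - (k + 1) + 1 = m - k by omega]
      · simp [Nat.choose_eq_zero_of_lt (show m < k + 1 by omega)]
    rw [Nat.choose_succ_succ m k, Nat.factorial_succ, Nat.add_sub_add_right, Nat.add_sub_add_right]
    push_cast
    linear_combination
      ((n + 1).choose (k + 1) : ℂ) * (-1) ^ (k + 1) * (k + 1) * k.factorial * z₂ ^ (n - k) * hz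
      + (m.choose k : ℂ) * (-1) ^ k * k.factorial * z₁ ^ (m - k) * z₂ ^ (n - k) * hn
  · simp
    ring

/-! ### The umbral functional -/

open MvPolynomial in
/-- The umbral functional on `ℂ[a, b]` (`a = X 0`, `b = X 1`), sending `a ^ i * b ^ j` to
`H_i(x) * H_j(y)`. -/
noncomputable def umbral (x y : ℂ) : MvPolynomial (Fin 2) ℂ →ₗ[ℂ] ℂ :=
  (basisMonomials (Fin 2) ℂ).constr ℂ fun d => hermitePhys (d 0) x * hermitePhys (d 1) y

open MvPolynomial in
lemma X_pow_mul_X_pow (i j : ℕ) : (X 0 ^ i * X 1 ^ j : MvPolynomial (Fin 2) ℂ) =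
    basisMonomials (Fin 2) ℂ (Finsupp.single 0 i + Finsupp.single 1 j) := by
  simp [X_pow_eq_monomial, monomial_mul]

open MvPolynomial in
lemma umbral_X_pow (x y : ℂ) (i j : ℕ) :
    umbral x y (X 0 ^ i * X 1 ^ j) = hermitePhys i x * hermitePhys j y := by
  rw [X_pow_mul_X_pow, umbral, Module.Basis.constr_basis]
  simp

open MvPolynomial in
lemma linearMap_ext_X_pow {f g : MvPolynomial (Fin 2) ℂ →ₗ[ℂ] ℂ}
    (h : ∀ i j : ℕ, f (X 0 ^ i * X 1 ^ j) = g (X 0 ^ i * X 1 ^ j)) : f = g := by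
  refine (basisMonomials (Fin 2) ℂ).ext fun d => ?_
  have hd : d = Finsupp.single 0 (d 0) + Finsupp.single 1 (d 1) := by
    ext t
    fin_cases t <;> simp
  rw [hd, ← X_pow_mul_X_pow]
  exact h _ _

open MvPolynomial in
lemma umbral_X_zero_mul (x y : ℂ) (P : MvPolynomial (Fin 2) ℂ) :
    umbral x y (X 0 * P) = 2 * x * umbral x y P - 2 * umbral x y (pderiv 0 P) := by
  have : umbral x y ∘ₗ LinearMap.mulLeft ℂ (X 0) =
      (2 * x) • umbral x y - (2 : ℂ) • (umbral x y ∘ₗ (pderiv 0).toLinearMap) := by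
    refine linearMap_ext_X_pow fun i j => ?_
    have h1 : (X 0 * (X 0 ^ i * X 1 ^ j) : MvPolynomial (Fin 2) ℂ) = X 0 ^ (i + 1) * X 1 ^ j := by
      ring
    have h2 : pderiv 0 (X 0 ^ i * X 1 ^ j : MvPolynomial (Fin 2) ℂ) =
        (i : ℂ) • (X 0 ^ (i - 1) * X 1 ^ j) := by
      simp [Derivation.leibniz, Derivation.leibniz_pow, smul_eq_C_mul]
      ring
    simp only [LinearMap.comp_apply, LinearMap.mulLeft_apply, LinearMap.sub_apply,
      LinearMap.smul_apply, Derivation.coeFn_coe, h1, h2, map_smul, umbral_X_pow, smul_eq_mul,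
      hermitePhys_succ]
    ring
  simpa using LinearMap.congr_fun this P

open MvPolynomial in
lemma umbral_X_one_mul (x y : ℂ) (P : MvPolynomial (Fin 2) ℂ) :
    umbral x y (X 1 * P) = 2 * y * umbral x y P - 2 * umbral x y (pderiv 1 P) := by
  have : umbral x y ∘ₗ LinearMap.mulLeft ℂ (X 1) =
      (2 * y) • umbral x y - (2 : ℂ) • (umbral x y ∘ₗ (pderiv 1).toLinearMap) := by
    refine linearMap_ext_X_pow fun i j => ?_
    have h1 : (X 1 * (X 0 ^ i * X 1 ^ j) : MvPolynomial (Fin 2) ℂ) = X 0 ^ i * X 1 ^ (j + 1) := by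
      ring
    have h2 : pderiv 1 (X 0 ^ i * X 1 ^ j : MvPolynomial (Fin 2) ℂ) =
        (j : ℂ) • (X 0 ^ i * X 1 ^ (j - 1)) := by
      simp [Derivation.leibniz, Derivation.leibniz_pow, smul_eq_C_mul]
      ring
    simp only [LinearMap.comp_apply, LinearMap.mulLeft_apply, LinearMap.sub_apply,
      LinearMap.smul_apply, Derivation.coeFn_coe, h1, h2, map_smul, umbral_X_pow, smul_eq_mul,
      hermitePhys_succ]
    ring
  simpa using LinearMap.congr_fun this P

/-! ### The conjugate linear forms -/

open MvPolynomial in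
/-- The linear form `(a + c b) / 2`; the values `c = i` and `c = -i` give the forms whose powers
represent `H_{m,n}`. -/
noncomputable def halfForm (c : ℂ) : MvPolynomial (Fin 2) ℂ :=
  (2⁻¹ : ℂ) • (X 0 + c • X 1)

open MvPolynomial in
/-- The derivation `∂/∂a + c ∂/∂b`, which appears as the correction term when `umbral` is
applied to a multiple of `halfForm c`. -/
noncomputable def dirDeriv (c : ℂ) :
    Derivation ℂ (MvPolynomial (Fin 2) ℂ) (MvPolynomial (Fin 2) ℂ) :=
  pderiv 0 + c • pderiv 1

open MvPolynomial in
lemma dirDeriv_halfForm (c d : ℂ) : dirDeriv c (halfForm d) = C ((1 + c * d) / 2) := by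
  have h1 : pderiv (0 : Fin 2) (X 1 : MvPolynomial (Fin 2) ℂ) = 0 := pderiv_X_of_ne (by decide)
  have h2 : pderiv (1 : Fin 2) (X 0 : MvPolynomial (Fin 2) ℂ) = 0 := pderiv_X_of_ne (by decide)
  simp only [dirDeriv, halfForm, Derivation.add_apply, Derivation.smul_apply, Derivation.map_smul,
    map_add, h1, h2, pderiv_X_self, smul_zero, add_zero, zero_add]
  simp only [smul_eq_C_mul, mul_one, ← C_mul, ← C_add, ← C_1]
  congr 1
  ring

lemma umbral_halfForm_mul (x y c : ℂ) (P : MvPolynomial (Fin 2) ℂ) :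
    umbral x y (halfForm c * P) = (x + c * y) * umbral x y P - umbral x y (dirDeriv c P) := by
  simp only [halfForm, dirDeriv, smul_mul_assoc, add_mul, map_smul, map_add, umbral_X_zero_mul,
    umbral_X_one_mul, Derivation.add_apply, Derivation.smul_apply, smul_eq_mul]
  ring

lemma dirDeriv_I : dirDeriv I (halfForm I) = 0 := by
  rw [dirDeriv_halfForm]; simp

lemma dirDeriv_neg_I : dirDeriv (-I) (halfForm (-I)) = 0 := by
  rw [dirDeriv_halfForm]; simp

lemma dirDeriv_I_neg_I : dirDeriv I (halfForm (-I)) = 1 := by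
  rw [dirDeriv_halfForm]; norm_num

/-- Powers of the two conjugate forms represent the two-variable polynomials: both sides satisfy
the recurrence of `hermite2_succ_succ`. -/
lemma umbral_halfForm_pow {x y z₁ z₂ : ℂ} (h₁ : x + I * y = z₁) (h₂ : x + -I * y = z₂) (m n : ℕ) :
    umbral x y (halfForm I ^ m * halfForm (-I) ^ n) = hermite2 m n z₁ z₂ := by
  induction m generalizing n with
  | zero =>
    rw [hermite2_zero_left, pow_zero, one_mul]
    induction n with
    | zero => simpa [hermitePhys_zero] using umbral_X_pow x y 0 0
    | succ n ih =>
      rw [pow_succ', umbral_halfForm_mul, ih, h₂, Derivation.leibniz_pow, dirDeriv_neg_I]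
      simp [pow_succ']
  | succ m ih =>
    have hD : dirDeriv I (halfForm I ^ m * halfForm (-I) ^ n) =
        (n : ℂ) • (halfForm I ^ m * halfForm (-I) ^ (n - 1)) := by
      simp [Derivation.leibniz, Derivation.leibniz_pow, dirDeriv_I, dirDeriv_I_neg_I,
        MvPolynomial.smul_eq_C_mul]
      ring
    rw [pow_succ', mul_assoc, umbral_halfForm_mul, hD, map_smul, ih, ih, h₁]
    rcases n with _ | n
    · simp [hermite2_zero_right, pow_succ']
    · simp [hermite2_succ_succ]

open MvPolynomial in
lemma halfForm_pow (c : ℂ) (m : ℕ) :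
    halfForm c ^ m = ((2 : ℂ) ^ m)⁻¹ • ∑ k ∈ Finset.range (m + 1),
      ((m.choose k : ℂ) * c ^ (m - k)) • (X 0 ^ k * X 1 ^ (m - k)) := by
  rw [halfForm, smul_pow, add_pow, inv_pow]
  congr 1
  refine Finset.sum_congr rfl fun k _ => ?_
  simp only [smul_eq_C_mul, mul_pow, C_mul, C_pow, map_natCast]
  ring

theorem hermite2_via_one_variable (m n : ℕ) (z₁ z₂ : ℂ) :
    hermite2 m n z₁ z₂ =
      ((2 : ℂ) ^ (m + n))⁻¹ *
        ∑ k ∈ Finset.range (m + 1), ∑ l ∈ Finset.range (n + 1),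
          (m.choose k : ℂ) * (n.choose l : ℂ) * Complex.I ^ (m - k) * (-Complex.I) ^ (n - l) *
            hermitePhys (k + l) ((z₁ + z₂) / 2) *
            hermitePhys (m + n - k - l) ((z₁ - z₂) / (2 * Complex.I)) := by
  have h₁ : (z₁ + z₂) / 2 + I * ((z₁ - z₂) / (2 * I)) = z₁ := by
    field_simp [I_ne_zero]; ring
  have h₂ : (z₁ + z₂) / 2 + -I * ((z₁ - z₂) / (2 * I)) = z₂ := by
    field_simp [I_ne_zero]; ring
  rw [← umbral_halfForm_pow h₁ h₂, halfForm_pow, halfForm_pow, smul_mul_smul_comm, map_smul,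
    smul_eq_mul, ← mul_inv, ← pow_add, Finset.sum_mul_sum, map_sum]
  congr 1
  refine Finset.sum_congr rfl fun k hk => ?_
  rw [map_sum]
  refine Finset.sum_congr rfl fun l hl => ?_
  rw [Finset.mem_range] at hk hl
  rw [smul_mul_smul_comm, mul_mul_mul_comm (MvPolynomial.X 0 ^ k), ← pow_add, ← pow_add, map_smul,
    umbral_X_pow, smul_eq_mul, show m - k + (n - l) = m + n - k - l by omega]
  ring
end

section
/- For all nonnegative integers m, n and all real numbers u, v, one has H♮_{m,n}(u, v) = H_{m,n}(u + i v, u − i v), where H♮_{m,n}(u,v) := ∑_{k=0}^{min(m,n)} ∑_{i=0}^{m−k} ∑_{j=0}^{n−k} (m! n!/(k! i! j!)) · i^{m+k−i−j}/((m−k−i)!(n−k−j)!) · u^{n−k−j+i} v^{m−k−i+j}. -/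
/-!
The identity holds separately for each `k`. Put `a = m - k`, `b = n - k`. Expanding
`(u + I v) ^ a` and `(u - I v) ^ b` by the binomial theorem, the coefficient of
`u ^ (b - j + i) * v ^ (a - i + j)` carries the phase
`(-1) ^ k * I ^ (a - i) * (-I) ^ j = I ^ (2 k + a - i - j) = I ^ (m + k - i - j)`,
and the binomial coefficients combine into the quotient of factorials
`m! n! / (k! i! (a - i)! j! (b - j)!)`.
-/

open Complex Finset

/-- The polynomial `H♮_{m,n}`. -/
noncomputable def hermite2Natural (m n : ℕ) (u v : ℂ) : ℂ :=
  ∑ k ∈ Finset.range (min m n + 1),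
    ∑ i ∈ Finset.range (m - k + 1),
      ∑ j ∈ Finset.range (n - k + 1),
        ((Nat.factorial m : ℂ) * (Nat.factorial n : ℂ) /
            ((Nat.factorial k : ℂ) * (Nat.factorial i : ℂ) * (Nat.factorial j : ℂ))) *
          (Complex.I ^ ((m : ℤ) + k - i - j) /
            ((Nat.factorial (m - k - i) : ℂ) * (Nat.factorial (n - k - j) : ℂ))) *
          u ^ (n - k - j + i) * v ^ (m - k - i + j)

/-- The phase of the `(i, j)` term, with `m = k + i + p`, so that `p = m - k - i`. -/
lemma I_zpow_phase (k i j p : ℕ) :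
    Complex.I ^ (((k + i + p : ℕ) : ℤ) + k - i - j) =
      (-1) ^ k * Complex.I ^ p * (-Complex.I) ^ j := by
  have h : ((k + i + p : ℕ) : ℤ) + k - i - j = ((2 * k + p : ℕ) : ℤ) - (j : ℤ) := by
    push_cast; ring
  rw [h, zpow_sub₀ Complex.I_ne_zero, zpow_natCast, zpow_natCast, pow_add, pow_mul,
    Complex.I_sq, div_eq_mul_inv, ← inv_pow, Complex.inv_I]

theorem hermite2Natural_eq_hermite2 (m n : ℕ) (u v : ℝ) :
    hermite2Natural m n (u : ℂ) (v : ℂ) =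
      hermite2 m n ((u : ℂ) + Complex.I * (v : ℂ)) ((u : ℂ) - Complex.I * (v : ℂ)) := by
  unfold hermite2Natural hermite2
  refine Finset.sum_congr rfl fun k hk => ?_
  have hk' := Finset.mem_range.mp hk
  obtain ⟨a, rfl⟩ : ∃ a, m = k + a := Nat.exists_eq_add_of_le (by omega)
  obtain ⟨b, rfl⟩ : ∃ b, n = k + b := Nat.exists_eq_add_of_le (by omega)
  simp only [Nat.add_sub_cancel_left]
  -- The order of summands in the second factor makes `j` the exponent of `-I v`.
  rw [show (u : ℂ) - Complex.I * v = -Complex.I * v + u by ring, add_pow (u : ℂ),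
    add_pow (-Complex.I * (v : ℂ)), mul_assoc, Finset.sum_mul_sum, Finset.mul_sum]
  refine Finset.sum_congr rfl fun i hi => ?_
  rw [Finset.mul_sum]
  refine Finset.sum_congr rfl fun j hj => ?_
  have hi' := Finset.mem_range.mp hi
  have hj' := Finset.mem_range.mp hj
  obtain ⟨p, rfl⟩ : ∃ p, a = i + p := Nat.exists_eq_add_of_le (by omega)
  obtain ⟨q, rfl⟩ : ∃ q, b = j + q := Nat.exists_eq_add_of_le (by omega)
  simp only [Nat.add_sub_cancel_left]
  rw [← add_assoc k i p, I_zpow_phase, Nat.cast_add_choose ℂ (a := i) (b := p),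
    Nat.cast_add_choose ℂ (a := j) (b := q), add_assoc k i p,
    Nat.cast_add_choose ℂ (a := k) (b := i + p), Nat.cast_add_choose ℂ (a := k) (b := j + q)]
  have hf (r : ℕ) : (Nat.factorial r : ℂ) ≠ 0 := Nat.cast_ne_zero.mpr r.factorial_ne_zero
  have := hf k
  have := hf i
  have := hf j
  have := hf p
  have := hf q
  have := hf (i + p)
  have := hf (j + q)
  simp only [mul_pow, pow_add]
  field_simp
end

section
/- For all nonnegative integers m, n, p, q, the combinatorial identity holds: 2^{−(p+q)} ∑_{k=0}^{m} ∑_{l=0}^{n} ∑_{i=0}^{p} ∑_{j=0}^{q} (m choose k)(n choose l)(p choose i)(q choose j) · i^{m−k+q−j} (−i)^{n−l+p−i} · (k+l)! (m+n−k−l)! · δ_{k+l, i+j} · δ_{m+n−k−l, p+q−i−j} = m! n! δ_{m,p} δ_{n,q}, where i denotes the imaginary unit in the powers, and δ is the Kronecker delta. -/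
/-!
Put `z = x + I y` and `w = x - I y`. The left-hand side (without the factor `2 ^ (-(p + q))`) is
the constant coefficient of `(∂ₓ - I ∂ᵧ) ^ p (∂ₓ + I ∂ᵧ) ^ q` applied to `z ^ m * w ^ n`: expand
both operator powers and both polynomial powers binomially, and use that the constant coefficient of
`∂ₓ ^ s ∂ᵧ ^ t (x ^ a * y ^ b)` is `a! b! δ_{a,s} δ_{b,t}`. On the other hand
`∂ₓ - I ∂ᵧ` sends `z` to `2` and `w` to `0`, while `∂ₓ + I ∂ᵧ` sends `z` to `0` and `w` to `2`, so the
same computation in the variables `z`, `w` gives `2 ^ (p + q) m! n! δ_{m,p} δ_{n,q}`.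
Both evaluations are instances of `constantCoeff_pow_pow`.
-/

namespace CombId

open MvPolynomial

/-- Complex polynomials in two variables, `X 0` and `X 1` standing for `x` and `y`. -/
abbrev P := MvPolynomial (Fin 2) ℂ

theorem derivation_pow_apply (D : Derivation ℂ P P) (u v : P) (c : ℂ) (hu : D u = C c)
    (hv : D v = 0) (m n p : ℕ) :
    ((D : Module.End ℂ P) ^ p) (u ^ m * v ^ n) =
      C (c ^ p * (m.descFactorial p : ℂ)) * (u ^ (m - p) * v ^ n) := by
  induction p with
  | zero => simp
  | succ p ih =>
    rw [pow_succ', Module.End.mul_apply, ih, ← smul_eq_C_mul, map_smul]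
    simp only [Derivation.coeFn_coe, Derivation.leibniz, Derivation.leibniz_pow, hu, hv,
      smul_eq_mul, nsmul_eq_mul, smul_eq_C_mul, Nat.descFactorial_succ, ← Nat.sub_sub]
    simp only [map_mul, map_pow, Nat.cast_mul, map_natCast]
    ring

/-- If `D₁, D₂` act on `u, v` as `c ∂/∂u` and `c ∂/∂v`, and `u, v` vanish at the origin, then
`D₁ ^ p D₂ ^ q` pairs with the monomials `u ^ m * v ^ n` as in Fischer's inner product. -/
theorem constantCoeff_pow_pow (D₁ D₂ : Derivation ℂ P P) (u v : P) (c : ℂ)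
    (h₁u : D₁ u = C c) (h₁v : D₁ v = 0) (h₂u : D₂ u = 0) (h₂v : D₂ v = C c)
    (hu : constantCoeff u = 0) (hv : constantCoeff v = 0) (m n p q : ℕ) :
    constantCoeff (((D₁ : Module.End ℂ P) ^ p) (((D₂ : Module.End ℂ P) ^ q) (u ^ m * v ^ n))) =
      c ^ (p + q) * ((m.factorial : ℂ) * (n.factorial : ℂ) *
        (if m = p then (1 : ℂ) else 0) * (if n = q then (1 : ℂ) else 0)) := by
  have key : ∀ a b : ℕ, (a.descFactorial b : ℂ) * (0 : ℂ) ^ (a - b) =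
      (a.factorial : ℂ) * (if a = b then (1 : ℂ) else 0) := by
    intro a b
    rcases lt_trichotomy a b with h | h | h
    · simp [Nat.descFactorial_of_lt h, h.ne]
    · subst h; simp [Nat.descFactorial_self]
    · simp [h.ne', (Nat.sub_pos_of_lt h).ne']
  rw [mul_comm (u ^ m), derivation_pow_apply D₂ v u c h₂v h₂u, ← smul_eq_C_mul, map_smul,
    mul_comm (v ^ _), derivation_pow_apply D₁ u v c h₁u h₁v, smul_eq_C_mul]
  simp only [map_mul, map_pow, constantCoeff_C, hu, hv]
  linear_combination (c ^ (p + q) * ((n.descFactorial q : ℂ) * (0 : ℂ) ^ (n - q))) * key m p +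
    (c ^ (p + q) * ((m.factorial : ℂ) * (if m = p then (1 : ℂ) else 0))) * key n q

theorem commute_pderiv :
    Commute ((pderiv 0 : Derivation ℂ P P) : Module.End ℂ P)
      ((pderiv 1 : Derivation ℂ P P) : Module.End ℂ P) := by
  have h : ⁅(pderiv 0 : Derivation ℂ P P), (pderiv 1 : Derivation ℂ P P)⁆ = 0 := by
    apply MvPolynomial.derivation_ext
    intro i
    fin_cases i <;> simp [Derivation.commutator_apply, pderiv_X]
  rw [commute_iff_lie_eq, ← Derivation.commutator_coe_linear_map, h]
  rfl

theorem add_smul_pow {A : Type*} [Ring A] [Algebra ℂ A] {a b : A} (h : Commute a b) (c : ℂ)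
    (n : ℕ) : (a + c • b) ^ n =
      ∑ k ∈ Finset.range (n + 1), ((n.choose k : ℂ) * c ^ (n - k)) • (a ^ k * b ^ (n - k)) := by
  rw [(h.smul_right c).add_pow]
  refine Finset.sum_congr rfl fun k _ => ?_
  rw [smul_pow, mul_smul_comm, smul_mul_assoc, (Nat.cast_commute _ _).eq.symm, mul_comm, mul_smul,
    ← nsmul_eq_mul, ← Nat.cast_smul_eq_nsmul ℂ, smul_comm]

/-- The product of two binomial expansions in the commuting elements `a, b`. -/
theorem mul_expand {A : Type*} [Ring A] [Algebra ℂ A] {a b : A} (h : Commute a b) (c d : ℂ)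
    (m n : ℕ) : (a + c • b) ^ m * (a + d • b) ^ n =
      ∑ k ∈ Finset.range (m + 1), ∑ l ∈ Finset.range (n + 1),
        ((m.choose k : ℂ) * (n.choose l : ℂ) * c ^ (m - k) * d ^ (n - l)) •
          (a ^ (k + l) * b ^ ((m - k) + (n - l))) := by
  rw [add_smul_pow h, add_smul_pow h, Finset.sum_mul_sum]
  refine Finset.sum_congr rfl fun k _ => Finset.sum_congr rfl fun l _ => ?_
  have hc : b ^ (m - k) * a ^ l = a ^ l * b ^ (m - k) := ((h.pow_pow l (m - k)).eq).symm
  rw [smul_mul_smul_comm, mul_assoc (a ^ k), ← mul_assoc (b ^ _), hc, pow_add, pow_add]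
  simp only [mul_assoc]
  congr 1
  ring

/-- The identity with all truncated subtractions written as `(m - k) + (n - l)` and the like. -/
theorem fischer_sum (m n p q : ℕ) :
    ∑ k ∈ Finset.range (m + 1), ∑ l ∈ Finset.range (n + 1),
      ∑ i ∈ Finset.range (p + 1), ∑ j ∈ Finset.range (q + 1),
        ((m.choose k : ℂ) * (n.choose l : ℂ) * Complex.I ^ (m - k) * (-Complex.I) ^ (n - l)) *
        (((p.choose i : ℂ) * (q.choose j : ℂ) * (-Complex.I) ^ (p - i) * Complex.I ^ (q - j)) *
        (((k + l).factorial : ℂ) * (((m - k) + (n - l)).factorial : ℂ) *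
          (if k + l = i + j then (1 : ℂ) else 0) *
          (if (m - k) + (n - l) = (p - i) + (q - j) then (1 : ℂ) else 0))) =
      2 ^ (p + q) * ((m.factorial : ℂ) * (n.factorial : ℂ) *
        (if m = p then (1 : ℂ) else 0) * (if n = q then (1 : ℂ) else 0)) := by
  have hC : (C 2 : P) = 2 := map_ofNat C 2
  set D₀ : Derivation ℂ P P := pderiv 0 with hD₀
  set D₁ : Derivation ℂ P P := pderiv 1 with hD₁
  have hI : (C Complex.I * C Complex.I : P) = -1 := by rw [← C_mul, Complex.I_mul_I]; simp
  -- The pairing evaluated in the variables `z`, `w`.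
  have closed := constantCoeff_pow_pow (D₀ + (-Complex.I) • D₁) (D₀ + Complex.I • D₁)
    (X 0 + Complex.I • X 1) (X 0 + (-Complex.I) • X 1) 2
    (by simp [hD₀, hD₁, pderiv_X, smul_eq_C_mul, hI]; norm_num [hC])
    (by simp [hD₀, hD₁, pderiv_X, smul_eq_C_mul, hI])
    (by simp [hD₀, hD₁, pderiv_X, smul_eq_C_mul, hI])
    (by simp [hD₀, hD₁, pderiv_X, smul_eq_C_mul, hI]; norm_num [hC])
    (by simp [smul_eq_C_mul]) (by simp [smul_eq_C_mul]) m n p q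
  -- The pairing of monomials in the variables `x`, `y`.
  have mono := fun a b s t : ℕ => constantCoeff_pow_pow D₀ D₁ (X 0) (X 1) 1
    (by simp [hD₀]) (by simp [hD₀, pderiv_X]) (by simp [hD₁, pderiv_X]) (by simp [hD₁])
    (by simp) (by simp) a b s t
  have ops : (((D₀ + (-Complex.I) • D₁ : Derivation ℂ P P) : Module.End ℂ P) ^ p) *
      (((D₀ + Complex.I • D₁ : Derivation ℂ P P) : Module.End ℂ P) ^ q) = _ :=
    mul_expand commute_pderiv (-Complex.I) Complex.I p q
  rw [← Module.End.mul_apply, ops, mul_expand (Commute.all (X 0 : P) (X 1))] at closed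
  rw [← closed]
  have cs : ∀ (c : ℂ) (f : P), constantCoeff (c • f) = c * constantCoeff f := by
    intro c f; simp [smul_eq_C_mul]
  simp only [map_sum, map_smul, LinearMap.sum_apply, LinearMap.smul_apply, Module.End.mul_apply,
    cs, ← hD₀, ← hD₁, mono, one_pow, one_mul, Finset.mul_sum]

end CombId

open Complex Finset

theorem combinatorial_identity (m n p q : ℕ) :
    ((2 : ℂ) ^ (p + q))⁻¹ *
      ∑ k ∈ Finset.range (m + 1), ∑ l ∈ Finset.range (n + 1),
        ∑ i ∈ Finset.range (p + 1), ∑ j ∈ Finset.range (q + 1),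
          (m.choose k : ℂ) * (n.choose l : ℂ) * (p.choose i : ℂ) * (q.choose j : ℂ) *
            Complex.I ^ (m - k + q - j) * (-Complex.I) ^ (n - l + p - i) *
            (Nat.factorial (k + l) : ℂ) * (Nat.factorial (m + n - k - l) : ℂ) *
            (if k + l = i + j then (1 : ℂ) else 0) *
            (if m + n - k - l = p + q - i - j then (1 : ℂ) else 0) =
    (Nat.factorial m : ℂ) * (Nat.factorial n : ℂ) *
      (if m = p then (1 : ℂ) else 0) * (if n = q then (1 : ℂ) else 0) := by
  rw [inv_mul_eq_iff_eq_mul₀ (pow_ne_zero _ two_ne_zero), ← CombId.fischer_sum]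
  refine Finset.sum_congr rfl fun k hk => Finset.sum_congr rfl fun l hl =>
    Finset.sum_congr rfl fun i hi => Finset.sum_congr rfl fun j hj => ?_
  rw [Finset.mem_range] at hk hl hi hj
  rw [show m - k + q - j = (m - k) + (q - j) by omega,
    show n - l + p - i = (n - l) + (p - i) by omega,
    show m + n - k - l = (m - k) + (n - l) by omega,
    show p + q - i - j = (p - i) + (q - j) by omega, pow_add, pow_add]
  ring
end

section
/- For all nonnegative integers m, n, p, q, the Gaussian orthogonality relation on ℝ² holds: ∫_{ℝ²} H_{m,n}(x + i y, x − i y) · conj(H_{p,q}(x + i y, x − i y)) · e^{−x² − y²} dx dy = π · m! n! δ_{m,p} δ_{n,q}. -/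
/-!
Write `⟨f⟩ = π⁻¹ ∫ f exp (-|z|²)`. In polar coordinates `⟨z ^ a z̄ ^ b⟩ = a! δ_{a,b}`, so
integration against the Gaussian becomes a finite computation. The recursion
`H_{m+1,n} = z H_{m,n} - n H_{m,n-1} = (z - ∂_z̄) H_{m,n}` and the integration by parts
`⟨z f⟩ = ⟨∂_z̄ f⟩` give `⟨H_{m,n} g⟩ = ⟨∂_z̄ ^ m ∂_z ^ n g⟩`; `hermite_moment` is this identity for a
monomial `g`, proved by induction on `m` at the level of moments.

Take `g = conj H_{p,q}`, which has degree `p` in `z̄` and `q` in `z`. The derivative vanishes if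
`p < m` or `q < n`, and equals `m! n!` if `p = m` and `q = n`. The cases `m < p` or `n < q` follow
by conjugation, since the pairing is Hermitian.
-/

open Complex Finset MeasureTheory

/-- The normalised Gaussian moments: `gaussMoment a b` is `π⁻¹ ∫ z ^ a * conj z ^ b * exp (-|z|²)`,
see `integral_monomial`. -/
noncomputable def gaussMoment (a b : ℕ) : ℂ := if a = b then (Nat.factorial a : ℂ) else 0

/-- Summing to any `N ≥ min m n` instead of `min m n` does not change the Hermite-type sum, as the
binomial coefficients vanish. -/
lemma sum_choose_extend (m n N : ℕ) (hN : min m n ≤ N) (f : ℕ → ℂ) :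
    ∑ k ∈ range (min m n + 1),
      (m.choose k : ℂ) * (n.choose k : ℂ) * (-1) ^ k * (Nat.factorial k : ℂ) * f k =
    ∑ k ∈ range (N + 1),
      (m.choose k : ℂ) * (n.choose k : ℂ) * (-1) ^ k * (Nat.factorial k : ℂ) * f k := by
  apply Finset.sum_subset
  · intro k hk
    simp only [Finset.mem_range] at hk ⊢
    omega
  · intro k _ hk
    simp only [Finset.mem_range] at hk
    rcases (by omega : m < k ∨ n < k) with h | h <;> simp [Nat.choose_eq_zero_of_lt h]

/-- The recursion `H_{m+1,n} = z H_{m,n} - n H_{m,n-1}`, with monomials replaced by an arbitrary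
function `f` of their exponents. -/
lemma hermite_moment_step (m n N : ℕ) (f : ℕ → ℕ → ℂ) (hN : m ≤ N) :
    ∑ k ∈ range (N + 1 + 1),
      ((m + 1).choose k : ℂ) * (n.choose k : ℂ) * (-1) ^ k * (Nat.factorial k : ℂ) *
        f (m + 1 - k) (n - k) =
    ∑ k ∈ range (N + 1),
      (m.choose k : ℂ) * (n.choose k : ℂ) * (-1) ^ k * (Nat.factorial k : ℂ) *
        f (m - k + 1) (n - k) -
    n * ∑ k ∈ range (N + 1),
      (m.choose k : ℂ) * ((n - 1).choose k : ℂ) * (-1) ^ k * (Nat.factorial k : ℂ) *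
        f (m - k) (n - 1 - k) := by
  have h1 : ∑ k ∈ range (N + 1),
      (m.choose k : ℂ) * (n.choose k : ℂ) * (-1) ^ k * (Nat.factorial k : ℂ) *
        f (m - k + 1) (n - k) = ∑ k ∈ range (N + 1 + 1),
      (m.choose k : ℂ) * (n.choose k : ℂ) * (-1) ^ k * (Nat.factorial k : ℂ) *
        f (m + 1 - k) (n - k) := by
    rw [Finset.sum_range_succ _ (N + 1), Nat.choose_eq_zero_of_lt (by omega : m < N + 1)]
    simp only [Nat.cast_zero, zero_mul, add_zero]
    refine Finset.sum_congr rfl fun k _ => ?_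
    by_cases hk : k ≤ m
    · rw [show m - k + 1 = m + 1 - k by omega]
    · simp [Nat.choose_eq_zero_of_lt (by omega : m < k)]
  rw [h1, Finset.sum_range_succ' _ (N + 1), Finset.sum_range_succ' _ (N + 1), Finset.mul_sum,
    add_sub_right_comm, ← Finset.sum_sub_distrib]
  congr 1
  · refine Finset.sum_congr rfl fun k _ => ?_
    have h2 : (n.choose (k + 1) : ℂ) * (k + 1) = n * ((n - 1).choose k : ℂ) := by
      rcases n with _ | n
      · simp
      · have := Nat.add_one_mul_choose_eq n k
        simp only [Nat.add_sub_cancel]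
        exact_mod_cast this.symm
    rw [Nat.choose_succ_succ', Nat.factorial_succ, show m + 1 - (k + 1) = m - k by omega,
      show n - (k + 1) = n - 1 - k by omega]
    push_cast
    linear_combination (-(m.choose k : ℂ) * (-1) ^ k * (Nat.factorial k : ℂ) *
        f (m - k) (n - 1 - k)) * h2
  · simp

/-- The right-hand side of `hermite_moment` satisfies the recursion of its left-hand side. All
truncated subtractions occur next to a vanishing factor. -/
lemma descFactorial_moment_step (m n a b : ℕ) :
    ((b.descFactorial (m + 1) : ℂ) * a.descFactorial n * gaussMoment (a - n) (b - (m + 1))) =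
    (b.descFactorial m : ℂ) * (a + 1).descFactorial n * gaussMoment (a + 1 - n) (b - m) -
      n * ((b.descFactorial m : ℂ) * a.descFactorial (n - 1) *
        gaussMoment (a - (n - 1)) (b - m)) := by
  have hd : ((a + 1).descFactorial n : ℂ) =
      a.descFactorial n + n * a.descFactorial (n - 1) := by
    rcases n with _ | n
    · simp
    · have h := Nat.succ_descFactorial_succ a n
      have h' := Nat.descFactorial_succ a n
      simp only [Nat.add_sub_cancel] at *
      rw [h, h']
      by_cases hn : n ≤ a
      · push_cast [Nat.cast_sub hn]; ring
      · simp [Nat.descFactorial_of_lt (by omega : a < n)]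
  have hn : (n : ℂ) * gaussMoment (a - (n - 1)) (b - m) =
      n * gaussMoment (a + 1 - n) (b - m) := by
    rcases n with _ | n
    · simp
    · rw [show a - (n + 1 - 1) = a + 1 - (n + 1) by omega]
  have key : (a.descFactorial n : ℂ) * ((b - m : ℕ) : ℂ) * gaussMoment (a - n) (b - (m + 1)) =
      a.descFactorial n * gaussMoment (a + 1 - n) (b - m) := by
    by_cases h : n ≤ a
    · rw [show a + 1 - n = a - n + 1 by omega, show b - (m + 1) = b - m - 1 by omega]
      generalize b - m = c
      generalize a - n = d
      rcases c with _ | c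
      · simp [gaussMoment]
      · by_cases hdc : d = c
        · subst hdc
          simp [gaussMoment, Nat.factorial_succ, mul_assoc]
        · simp [gaussMoment, hdc]
    · simp [Nat.descFactorial_of_lt (by omega : a < n)]
  rw [hd, Nat.descFactorial_succ]
  push_cast
  linear_combination (b.descFactorial m : ℂ) * key +
    (b.descFactorial m : ℂ) * a.descFactorial (n - 1) * hn

/-- Pairing `H_{m,n}` with the monomial `z ^ a * conj z ^ b` under the Gaussian functional gives the
moment of `∂_z̄ ^ m ∂_z ^ n (z ^ a * conj z ^ b)`. -/
lemma hermite_moment (m n a b N : ℕ) (hN : m ≤ N) :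
    ∑ k ∈ range (N + 1),
      (m.choose k : ℂ) * (n.choose k : ℂ) * (-1) ^ k * (Nat.factorial k : ℂ) *
        gaussMoment (m - k + a) (n - k + b) =
    (b.descFactorial m : ℂ) * a.descFactorial n * gaussMoment (a - n) (b - m) := by
  induction m generalizing n a b N with
  | zero =>
    rw [Finset.sum_range_succ']
    simp only [Nat.choose_zero_succ, Nat.cast_zero, zero_mul, Finset.sum_const_zero, zero_add,
      Nat.choose_zero_right, Nat.cast_one, pow_zero, Nat.factorial_zero, one_mul,
      Nat.sub_zero, Nat.descFactorial_zero]
    by_cases h : n ≤ a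
    · by_cases hb : a = n + b
      · subst hb
        have := Nat.factorial_mul_descFactorial (Nat.le_add_right n b)
        simp only [gaussMoment, Nat.add_sub_cancel_left, if_true] at *
        rw [mul_comm]
        exact_mod_cast this.symm
      · have hb' : a - n ≠ b := by omega
        simp [gaussMoment, hb, hb']
    · have hb : a ≠ n + b := by omega
      simp [gaussMoment, Nat.descFactorial_of_lt (by omega : a < n), hb]
  | succ m ih =>
    obtain ⟨N, rfl⟩ : ∃ K, N = K + 1 := ⟨N - 1, by omega⟩
    rw [hermite_moment_step m n N (fun i j => gaussMoment (i + a) (j + b)) (by omega),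
      descFactorial_moment_step, ← ih n (a + 1) b N (by omega), ← ih (n - 1) a b N (by omega)]
    simp only [add_assoc, add_comm 1 a]

lemma integrable_monomial (a b : ℕ) : Integrable (fun w : ℝ × ℝ =>
    ((w.1 : ℂ) + I * (w.2 : ℂ)) ^ a * ((w.1 : ℂ) - I * (w.2 : ℂ)) ^ b *
      ((Real.exp (-w.1 ^ 2 - w.2 ^ 2) : ℝ) : ℂ)) := by
  have hg : Integrable (fun x : ℝ => Real.exp (-(1 / 2) * x ^ 2)) :=
    integrable_exp_neg_mul_sq (by norm_num)
  have hG : Integrable (fun w : ℝ × ℝ => (2 ^ (a + b) * (a + b).factorial * Real.exp (1 / 2)) *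
      (Real.exp (-(1 / 2) * w.1 ^ 2) * Real.exp (-(1 / 2) * w.2 ^ 2))) :=
    (hg.mul_prod hg).const_mul _
  refine hG.mono' (by fun_prop) (Filter.Eventually.of_forall fun w => ?_)
  set t : ℝ := (1 + (w.1 ^ 2 + w.2 ^ 2)) / 2 with ht
  have ht0 : 0 ≤ t := by positivity
  have hz : ∀ z : ℂ, normSq z = w.1 ^ 2 + w.2 ^ 2 → ‖z‖ ≤ 2 * t := by
    intro z h
    rw [normSq_eq_norm_sq] at h
    nlinarith [sq_nonneg (‖z‖ - 1), norm_nonneg z]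
  have h1 := hz ((w.1 : ℂ) + I * (w.2 : ℂ)) (by simp [normSq_apply]; ring)
  have h2 := hz ((w.1 : ℂ) - I * (w.2 : ℂ)) (by simp [normSq_apply]; ring)
  have h3 : t ^ (a + b) ≤ (a + b).factorial * Real.exp t := by
    have := Real.pow_div_factorial_le_exp t ht0 (a + b)
    rwa [div_le_iff₀' (by positivity)] at this
  rw [norm_mul, norm_mul, norm_pow, norm_pow, norm_real, Real.norm_of_nonneg (Real.exp_nonneg _)]
  calc _ ≤ (2 * t) ^ a * (2 * t) ^ b * Real.exp (-w.1 ^ 2 - w.2 ^ 2) := by gcongr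
    _ = 2 ^ (a + b) * t ^ (a + b) * Real.exp (-w.1 ^ 2 - w.2 ^ 2) := by
      rw [← pow_add, mul_pow]
    _ ≤ 2 ^ (a + b) * ((a + b).factorial * Real.exp t) * Real.exp (-w.1 ^ 2 - w.2 ^ 2) := by
      gcongr
    _ = _ := by
      have : Real.exp t * Real.exp (-w.1 ^ 2 - w.2 ^ 2) = Real.exp (1 / 2) *
          (Real.exp (-(1 / 2) * w.1 ^ 2) * Real.exp (-(1 / 2) * w.2 ^ 2)) := by
        simp only [← Real.exp_add]
        congr 1
        rw [ht]; ring
      linear_combination (2 ^ (a + b) * ((a + b).factorial : ℝ)) * this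

lemma integral_angular (a b : ℕ) :
    ∫ θ in Set.Ioo (-Real.pi) Real.pi, cexp (((a : ℂ) - b) * I * θ) =
      if a = b then 2 * (Real.pi : ℂ) else 0 := by
  rw [← integral_Ioc_eq_integral_Ioo, ← intervalIntegral.integral_of_le
    (by linarith [Real.pi_pos])]
  split_ifs with h
  · subst h
    simp
    ring
  · have hc : ((a : ℂ) - b) * I ≠ 0 := by
      refine mul_ne_zero (sub_ne_zero.2 ?_) I_ne_zero
      exact_mod_cast h
    rw [integral_exp_mul_complex hc, div_eq_zero_iff]
    left
    rw [sub_eq_zero, Complex.exp_eq_exp_iff_exists_int]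
    refine ⟨(a : ℤ) - b, ?_⟩
    push_cast
    ring

lemma integral_radial (a : ℕ) :
    ∫ r in Set.Ioi (0 : ℝ), (((r ^ (2 * a + 1) * Real.exp (-r ^ 2) : ℝ)) : ℂ) =
      (Nat.factorial a : ℂ) / 2 := by
  rw [integral_complex_ofReal]
  have hq : (0 : ℝ) ≤ 2 * a + 1 := by positivity
  have h := _root_.integral_rpow_mul_exp_neg_mul_rpow (p := 2) (q := 2 * a + 1) (b := 1) two_pos
    (by linarith) one_pos
  have h2 : ∫ r in Set.Ioi (0 : ℝ), r ^ (2 * a + 1) * Real.exp (-r ^ 2) = a.factorial / 2 := by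
    rw [Real.one_rpow, show ((2 * a + 1 + 1 : ℝ) / 2) = a + 1 by ring,
      Real.Gamma_nat_eq_factorial] at h
    rw [show (a.factorial : ℝ) / 2 = 1 * (1 / 2) * a.factorial by ring, ← h]
    refine integral_congr_ae (Filter.Eventually.of_forall fun r => ?_)
    have : r ^ (2 * (a : ℝ) + 1) = r ^ (2 * a + 1) := by
      rw [← Real.rpow_natCast]; push_cast; rfl
    simp [this]
  rw [h2]
  simp

/-- In polar coordinates the angular integral kills all moments with `a ≠ b`, and the remaining
radial integral is a Gamma value. -/
lemma integral_monomial (a b : ℕ) : ∫ w : ℝ × ℝ,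
    ((w.1 : ℂ) + I * (w.2 : ℂ)) ^ a * ((w.1 : ℂ) - I * (w.2 : ℂ)) ^ b *
      ((Real.exp (-w.1 ^ 2 - w.2 ^ 2) : ℝ) : ℂ) = Real.pi * gaussMoment a b := by
  rw [← integral_comp_polarCoord_symm]
  have h : ∀ p : ℝ × ℝ, p.1 • ((((polarCoord.symm p).1 : ℂ) + I * ((polarCoord.symm p).2 : ℂ)) ^ a *
      (((polarCoord.symm p).1 : ℂ) - I * ((polarCoord.symm p).2 : ℂ)) ^ b *
      ((Real.exp (-(polarCoord.symm p).1 ^ 2 - (polarCoord.symm p).2 ^ 2) : ℝ) : ℂ)) =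
      (((p.1 ^ (a + b + 1) * Real.exp (-p.1 ^ 2) : ℝ)) : ℂ) *
        cexp (((a : ℂ) - b) * I * p.2) := by
    rintro ⟨r, θ⟩
    have e1 : ((r * Real.cos θ : ℝ) : ℂ) + I * ((r * Real.sin θ : ℝ) : ℂ) =
        r * cexp (θ * I) := by
      rw [Complex.exp_mul_I]; push_cast; ring
    have e2 : ((r * Real.cos θ : ℝ) : ℂ) - I * ((r * Real.sin θ : ℝ) : ℂ) =
        r * cexp (-θ * I) := by
      rw [Complex.exp_mul_I, Complex.cos_neg, Complex.sin_neg]; push_cast; ring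
    have e3 : -(r * Real.cos θ) ^ 2 - (r * Real.sin θ) ^ 2 = -r ^ 2 := by
      linear_combination -r ^ 2 * Real.sin_sq_add_cos_sq θ
    have e4 : cexp (((a : ℂ) - b) * I * θ) = cexp (θ * I) ^ a * cexp (-θ * I) ^ b := by
      rw [← Complex.exp_nat_mul, ← Complex.exp_nat_mul, ← Complex.exp_add]
      congr 1; ring
    simp only [polarCoord_symm_apply, e1, e2, e3, e4, real_smul]
    push_cast
    ring
  simp only [h, polarCoord_target]
  rw [Measure.volume_eq_prod, setIntegral_prod_mul
    (fun r : ℝ => (((r ^ (a + b + 1) * Real.exp (-r ^ 2) : ℝ)) : ℂ))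
    (fun θ : ℝ => cexp (((a : ℂ) - b) * I * θ)), integral_angular]
  by_cases hab : a = b
  · subst hab
    rw [← two_mul a, integral_radial]
    simp [gaussMoment]
    ring
  · simp [hab, gaussMoment]

/-- On the slice `z₂ = conj z₁`, conjugation exchanges the two arguments. -/
lemma conj_hermite2 (p q : ℕ) (x y : ℝ) :
    (starRingEnd ℂ) (hermite2 p q ((x : ℂ) + I * y) ((x : ℂ) - I * y)) =
      hermite2 p q ((x : ℂ) - I * y) ((x : ℂ) + I * y) := by
  simp [hermite2, map_sum, sub_eq_add_neg]

/-- The value of the integral as a finite combination of the numbers from `hermite_moment`. -/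
lemma integral_eq_sum (m n p q : ℕ) :
    ∫ w : ℝ × ℝ,
        hermite2 m n ((w.1 : ℂ) + I * (w.2 : ℂ)) ((w.1 : ℂ) - I * (w.2 : ℂ)) *
          (starRingEnd ℂ) (hermite2 p q ((w.1 : ℂ) + I * (w.2 : ℂ)) ((w.1 : ℂ) - I * (w.2 : ℂ))) *
          ((Real.exp (-w.1 ^ 2 - w.2 ^ 2) : ℝ) : ℂ) =
    Real.pi * ∑ j ∈ range (min p q + 1),
      (p.choose j : ℂ) * (q.choose j : ℂ) * (-1) ^ j * (Nat.factorial j : ℂ) *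
        (((p - j).descFactorial m : ℂ) * (q - j).descFactorial n *
          gaussMoment (q - j - n) (p - j - m)) := by
  set c : ℕ → ℕ → ℕ → ℂ := fun m n k =>
    (m.choose k : ℂ) * (n.choose k : ℂ) * (-1) ^ k * (Nat.factorial k : ℂ) with hc
  have hexp : ∀ w : ℝ × ℝ,
      hermite2 m n ((w.1 : ℂ) + I * (w.2 : ℂ)) ((w.1 : ℂ) - I * (w.2 : ℂ)) *
          (starRingEnd ℂ) (hermite2 p q ((w.1 : ℂ) + I * (w.2 : ℂ)) ((w.1 : ℂ) - I * (w.2 : ℂ))) *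
          ((Real.exp (-w.1 ^ 2 - w.2 ^ 2) : ℝ) : ℂ) =
      ∑ j ∈ range (min p q + 1), ∑ k ∈ range (min m n + 1), (c p q j * c m n k) *
        (((w.1 : ℂ) + I * (w.2 : ℂ)) ^ (m - k + (q - j)) *
          ((w.1 : ℂ) - I * (w.2 : ℂ)) ^ (n - k + (p - j)) *
          ((Real.exp (-w.1 ^ 2 - w.2 ^ 2) : ℝ) : ℂ)) := by
    intro w
    rw [conj_hermite2, mul_comm (hermite2 m n _ _), hermite2, hermite2, Finset.sum_mul_sum,
      Finset.sum_mul]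
    refine Finset.sum_congr rfl fun j _ => ?_
    rw [Finset.sum_mul]
    refine Finset.sum_congr rfl fun k _ => ?_
    simp only [hc, pow_add]
    ring
  simp only [hexp]
  rw [integral_finsetSum _ fun j _ => integrable_finsetSum _ fun k _ =>
    (integrable_monomial _ _).const_mul _, Finset.mul_sum]
  refine Finset.sum_congr rfl fun j _ => ?_
  rw [integral_finsetSum _ fun k _ => (integrable_monomial _ _).const_mul _,
    ← hermite_moment m n (q - j) (p - j) m le_rfl,
    ← sum_choose_extend m n m (min_le_left _ _)
      (fun k => gaussMoment (m - k + (q - j)) (n - k + (p - j))), Finset.mul_sum, Finset.mul_sum]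
  refine Finset.sum_congr rfl fun k _ => ?_
  rw [integral_const_mul, integral_monomial]
  simp only [hc]
  ring

/-- The degree argument: `∂_z̄ ^ m ∂_z ^ n` annihilates `conj H_{p,q}` when `p < m` or `q < n`. -/
lemma integral_eq_zero (m n p q : ℕ) (h : p < m ∨ q < n) :
    ∫ w : ℝ × ℝ,
        hermite2 m n ((w.1 : ℂ) + I * (w.2 : ℂ)) ((w.1 : ℂ) - I * (w.2 : ℂ)) *
          (starRingEnd ℂ) (hermite2 p q ((w.1 : ℂ) + I * (w.2 : ℂ)) ((w.1 : ℂ) - I * (w.2 : ℂ))) *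
          ((Real.exp (-w.1 ^ 2 - w.2 ^ 2) : ℝ) : ℂ) = 0 := by
  rw [integral_eq_sum, Finset.sum_eq_zero, mul_zero]
  intro j _
  rcases h with h | h
  · simp [Nat.descFactorial_of_lt (by omega : p - j < m)]
  · simp [Nat.descFactorial_of_lt (by omega : q - j < n)]

theorem gaussian_orthogonality (m n p q : ℕ) :
    ∫ w : ℝ × ℝ,
        hermite2 m n ((w.1 : ℂ) + Complex.I * (w.2 : ℂ)) ((w.1 : ℂ) - Complex.I * (w.2 : ℂ)) *
          (starRingEnd ℂ)
            (hermite2 p q ((w.1 : ℂ) + Complex.I * (w.2 : ℂ))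
              ((w.1 : ℂ) - Complex.I * (w.2 : ℂ))) *
          ((Real.exp (-w.1 ^ 2 - w.2 ^ 2) : ℝ) : ℂ) =
      (Real.pi : ℂ) * (Nat.factorial m : ℂ) * (Nat.factorial n : ℂ) *
        (if m = p then (1 : ℂ) else 0) * (if n = q then (1 : ℂ) else 0) := by
  by_cases heq : m = p ∧ n = q
  · obtain ⟨rfl, rfl⟩ := heq
    rw [integral_eq_sum, Finset.sum_range_succ', Finset.sum_eq_zero]
    · simp [gaussMoment, Nat.descFactorial_self, mul_assoc]
    · intro j hj
      rw [Finset.mem_range] at hj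
      simp [Nat.descFactorial_of_lt (by omega : m - (j + 1) < m)]
  · have hr : (Real.pi : ℂ) * (Nat.factorial m : ℂ) * (Nat.factorial n : ℂ) *
        (if m = p then (1 : ℂ) else 0) * (if n = q then (1 : ℂ) else 0) = 0 := by
      by_cases h1 : m = p
      · simp [show n ≠ q from fun h => heq ⟨h1, h⟩]
      · simp [h1]
    rw [hr]
    by_cases h : p < m ∨ q < n
    · exact integral_eq_zero m n p q h
    · -- The remaining case is the conjugate of the previous one with the indices exchanged.
      have h0 := congrArg (starRingEnd ℂ) (integral_eq_zero p q m n (by omega))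
      rw [← integral_conj, map_zero] at h0
      rw [← h0]
      refine integral_congr_ae (Filter.Eventually.of_forall fun w => ?_)
      simp only [map_mul, conj_conj, conj_ofReal]
      ring
end

section
/- Let 0 < α < 1. For all z₁, z₂, w₁, w₂ ∈ ℂ, the family (h^{(α)}_{m,n}(z₁,z₂) · conj(h^{(α)}_{m,n}(w₁,w₂)))_{(m,n)∈ℕ²} is summable and ∑_{m,n=0}^∞ h^{(α)}_{m,n}(z₁, z₂) · conj(h^{(α)}_{m,n}(w₁, w₂)) = ((1−α²)²/(16α²)) · exp[−((1+α²)/(4α))(z₁ z₂ + conj(w₁) conj(w₂)) + ((1−α²)/(4α))(z₁ conj(w₁) + z₂ conj(w₂))]. -/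
/-!
With `t = (1 - α) / (1 + α)` and `uᵢ = conj wᵢ`, the claim is, up to Gaussian factors, the Mehler
formula
`∑ t^(m+n) / (m! n!) H_{m,n}(z) H_{m,n}(u)
  = (1 - t²)⁻¹ exp ((t (z₁ u₁ + z₂ u₂) - t² (z₁ z₂ + u₁ u₂)) / (1 - t²))` (`hasSum_mehler`).

Expand `H_{m,n}(u)` as a sum over `l` and put `m = p + l`, `n = q + l`. For fixed `l`, the sum over
`p` and `q` is a shifted generating function of the `H_{p+l,q+l}(z)` with `x = t u₁`, `y = t u₂`; it
equals `exp (x z₁ + y z₂ - x y) H_{l,l}(z₁ - y, z₂ - x)` (`hasSum_gh_both`). The diagonal polynomials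
`H_{l,l}` are Laguerre polynomials, and their generating function (`hasSum_gh_diag`) performs the
remaining sum over `l`.

Rearranging the triple series needs absolute convergence. Replacing the signs `(-1)^k` in the
Hermite polynomials by `1` and all variables by their absolute values gives a majorant of the same
form, and the same computation, run over `ℝ` with `ε = 1`, sums it to a finite value. For this reason
the generating functions are proved for the polynomials `gh ε` with a general sign `ε`.
-/

open Complex Finset

/-- The Hermite function `h^{(α)}_{m,n}`. -/
noncomputable def hermiteFun (α : ℝ) (m n : ℕ) (z₁ z₂ : ℂ) : ℂ :=
  ((((1 - α) / (2 * Real.sqrt α)) *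
      ((1 - α) / (1 + α)) ^ (((m + n : ℕ) : ℝ) / 2) /
      Real.sqrt (Nat.factorial m * Nat.factorial n) : ℝ) : ℂ) *
    Complex.exp (-(z₁ * z₂) / 2) * hermite2 m n z₁ z₂

theorem hasSum_of_eq {ι R : Type*} [AddCommMonoid R] [TopologicalSpace R] {f g : ι → R} {a b : R}
    (h : HasSum f a) (hf : ∀ i, g i = f i) (ha : b = a) : HasSum g b := by
  rw [ha, show g = f from funext hf]
  exact h

/-- The two-variable Hermite polynomial over a field `𝕜` with the sign `-1` replaced by a
parameter `ε`; `ε = -1` gives `hermite2`, and `ε = 1` gives a polynomial with nonnegative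
coefficients that dominates it. The sum runs over `k ≤ n`: the terms with `k > m` vanish because
`m.choose k = 0`. -/
noncomputable def gh {𝕜 : Type*} [Field 𝕜] (ε : 𝕜) (m n : ℕ) (x y : 𝕜) : 𝕜 :=
  ∑ k ∈ range (n + 1),
    (m.choose k : 𝕜) * (n.choose k : 𝕜) * ε ^ k * (Nat.factorial k : 𝕜) *
      x ^ (m - k) * y ^ (n - k)

/-- Any summation range reaching `min m n` gives the same polynomial, since the binomial
coefficients kill the additional terms. -/
theorem gh_eq_sum_range {𝕜 : Type*} [Field 𝕜] (ε : 𝕜) (m n N : ℕ) (x y : 𝕜)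
    (hN : min m n < N) :
    gh ε m n x y = ∑ k ∈ range N,
      (m.choose k : 𝕜) * (n.choose k : 𝕜) * ε ^ k * (Nat.factorial k : 𝕜) *
        x ^ (m - k) * y ^ (n - k) := by
  have key : ∀ M, min m n < M → ∑ k ∈ range M,
      (m.choose k : 𝕜) * (n.choose k : 𝕜) * ε ^ k * (Nat.factorial k : 𝕜) *
        x ^ (m - k) * y ^ (n - k) = ∑ k ∈ range (min m n + 1),
      (m.choose k : 𝕜) * (n.choose k : 𝕜) * ε ^ k * (Nat.factorial k : 𝕜) *
        x ^ (m - k) * y ^ (n - k) := by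
    intro M hM
    symm
    refine Finset.sum_subset (Finset.range_mono hM) fun k _ hk => ?_
    rw [Finset.mem_range, not_lt] at hk
    rcases min_lt_iff.1 (Nat.lt_of_succ_le hk) with h | h <;>
      simp [Nat.choose_eq_zero_of_lt h]
  rw [gh, key N hN, key (n + 1) (by omega)]

theorem hermite2_eq_gh (m n : ℕ) (x y : ℂ) : hermite2 m n x y = gh (-1) m n x y := by
  rw [gh_eq_sum_range (N := min m n + 1) (hN := by omega), hermite2]

theorem gh_swap {𝕜 : Type*} [Field 𝕜] (ε : 𝕜) (m n : ℕ) (x y : 𝕜) :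
    gh ε m n x y = gh ε n m y x := by
  rw [gh_eq_sum_range ε m n (m + 1) x y (by omega), gh]
  exact Finset.sum_congr rfl fun k _ => by ring

theorem gh_zero_right {𝕜 : Type*} [Field 𝕜] (ε : 𝕜) (m : ℕ) (x y : 𝕜) :
    gh ε m 0 x y = x ^ m := by simp [gh]

theorem gh_zero_left {𝕜 : Type*} [Field 𝕜] (ε : 𝕜) (n : ℕ) (x y : 𝕜) :
    gh ε 0 n x y = y ^ n := by rw [gh_swap, gh_zero_right]

/-- The three-term recurrence `H_{m+1,n+1} = y H_{m+1,n} + ε (m+1) H_{m,n}`. -/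
theorem gh_succ_succ {𝕜 : Type*} [Field 𝕜] (ε : 𝕜) (m n : ℕ) (x y : 𝕜) :
    gh ε (m + 1) (n + 1) x y = y * gh ε (m + 1) n x y + ε * (m + 1) * gh ε m n x y := by
  rw [gh_eq_sum_range ε (m + 1) n (n + 2) x y (by omega), gh, gh, Finset.sum_range_succ',
    Finset.sum_range_succ' _ (n + 1), mul_add, Finset.mul_sum, Finset.mul_sum,
    add_right_comm, ← Finset.sum_add_distrib]
  congr 1
  -- Coefficients at `k + 1`: Pascal's rule in `n`, absorption `(k+1) C(m+1,k+1) = (m+1) C(m,k)`.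
  · refine Finset.sum_congr rfl fun k hk => ?_
    have h1 : ((m + 1).choose (k + 1) : 𝕜) * (k + 1) = (m + 1) * m.choose k := by
      have := congrArg (Nat.cast : ℕ → 𝕜) (Nat.add_one_mul_choose_eq m k)
      push_cast at this
      exact this.symm
    have h2 : (n.choose (k + 1) : 𝕜) * y ^ (n - k)
        = n.choose (k + 1) * (y * y ^ (n - (k + 1))) := by
      rcases Nat.lt_or_ge n (k + 1) with h | h
      · simp [Nat.choose_eq_zero_of_lt h]
      · rw [← pow_succ', show n - (k + 1) + 1 = n - k by omega]
    rw [Nat.choose_succ_succ n k, Nat.add_sub_add_right, Nat.add_sub_add_right,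
      Nat.factorial_succ]
    push_cast
    linear_combination (((m + 1).choose (k + 1) : 𝕜) * ε ^ (k + 1) * ((k + 1) * k.factorial) *
      x ^ (m - k)) * h2 + (n.choose k * ε ^ (k + 1) * k.factorial * x ^ (m - k) * y ^ (n - k)) * h1
  · simp; ring

/-- The polynomial with `ε = 1`, evaluated at the absolute values, majorizes the one with any
unimodular `ε`. This makes every series below dominated by one of the same shape. -/
theorem norm_gh_le {𝕜 : Type*} [RCLike 𝕜] (ε : 𝕜) (hε : ‖ε‖ = 1) (m n : ℕ) (x y : 𝕜) :
    ‖gh ε m n x y‖ ≤ gh 1 m n ‖x‖ ‖y‖ := by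
  refine (norm_sum_le _ _).trans (le_of_eq ?_)
  simp [gh, hε]

/-- The partial generating function in the first index, shifted by `a`. It is the `a`-th derivative
in `t` of `∑ tᵖ / p! H_{p,n}(x, y) = exp (t x) (y + ε t)ⁿ`, and follows from the recurrence by
induction on `n`. -/
theorem hasSum_gh_left {𝕜 : Type*} [RCLike 𝕜] (ε t x y : 𝕜) (n a : ℕ) :
    HasSum (fun p : ℕ => t ^ p / p.factorial * gh ε (p + a) n x y)
      (NormedSpace.exp (t * x) * gh ε a n x (y + ε * t)) := by
  induction n generalizing a with
  | zero =>
    simp only [gh_zero_right]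
    exact hasSum_of_eq ((NormedSpace.expSeries_div_hasSum_exp (t * x)).mul_right (x ^ a))
      (fun p => by ring) rfl
  | succ n ih =>
    -- For `p = a = 0` the truncated index `p + a - 1` is harmless because of the factor `p`.
    have hs : HasSum (fun p : ℕ => t ^ p / p.factorial * (p * gh ε (p + a - 1) n x y))
        (t * (NormedSpace.exp (t * x) * gh ε a n x (y + ε * t))) := by
      rw [← hasSum_nat_add_iff' 1]
      simp only [Finset.range_one, Finset.sum_singleton, Nat.cast_zero, zero_mul, mul_zero,
        sub_zero]
      refine hasSum_of_eq ((ih a).mul_left t) (fun p => ?_) rfl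
      rw [show p + 1 + a - 1 = p + a by omega, Nat.factorial_succ, pow_succ]
      have : (p.factorial : 𝕜) ≠ 0 := by exact_mod_cast p.factorial_ne_zero
      have : ((p : 𝕜) + 1) ≠ 0 := by exact_mod_cast p.succ_ne_zero
      push_cast
      field_simp
    rcases a with _ | a
    · refine hasSum_of_eq (((ih 0).mul_left y).add (hs.mul_left ε)) (fun p => ?_) ?_
      · rcases p with _ | p
        · simp [gh_zero_left, pow_succ']
        · simp only [add_zero, gh_succ_succ, Nat.add_sub_cancel]
          push_cast
          ring
      · simp only [gh_zero_left]
        ring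
    · refine hasSum_of_eq ((((ih (a + 1)).mul_left y).add (hs.mul_left ε)).add
        ((ih a).mul_left (ε * (a + 1)))) (fun p => ?_) ?_
      · simp only [← add_assoc, gh_succ_succ, Nat.add_sub_cancel]
        push_cast
        ring
      · simp only [gh_succ_succ]
        ring

theorem hasSum_gh_right {𝕜 : Type*} [RCLike 𝕜] (ε t x y : 𝕜) (a n : ℕ) :
    HasSum (fun q : ℕ => t ^ q / q.factorial * gh ε a (q + n) x y)
      (NormedSpace.exp (t * y) * gh ε a n (x + ε * t) y) := by
  simp only [gh_swap ε a]
  exact hasSum_gh_left ε t y x a n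

/-- An iterated sum is an unordered double sum as soon as the norms are dominated by a family
whose iterated sums converge. -/
theorem hasSum_prod_of_bound {β γ E : Type*} [NormedAddCommGroup E] [CompleteSpace E]
    {f : β × γ → E} {F : β × γ → ℝ} {G : β → ℝ} {g : β → E} {a : E}
    (hle : ∀ p, ‖f p‖ ≤ F p) (hF : ∀ b, HasSum (fun c => F (b, c)) (G b)) (hG : Summable G)
    (hf : ∀ b, HasSum (fun c => f (b, c)) (g b)) (hg : HasSum g a) : HasSum f a := by
  have hsF : Summable F := by
    rw [summable_prod_of_nonneg fun p => (norm_nonneg _).trans (hle p)]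
    exact ⟨fun b => (hF b).summable, by simpa only [(hF _).tsum_eq] using hG⟩
  have hsf : Summable f := hsF.of_norm_bounded hle
  have := hsf.hasSum
  rwa [(this.prod_fiberwise hf).unique hg] at this

/-- The generating function in both indices, shifted by `(a, b)`. The index `p.1` shifts the second
index of the polynomial and `p.2` the first one. -/
theorem hasSum_gh_both {𝕜 : Type*} [RCLike 𝕜] (ε : 𝕜) (hε : ‖ε‖ = 1) (s t x y : 𝕜) (a b : ℕ) :
    HasSum (fun p : ℕ × ℕ => t ^ p.1 / p.1.factorial *
        (s ^ p.2 / p.2.factorial * gh ε (p.2 + a) (p.1 + b) x y))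
      (NormedSpace.exp (s * x) * (NormedSpace.exp (t * (y + ε * s)) *
        gh ε a b (x + ε * t) (y + ε * s))) := by
  refine hasSum_prod_of_bound
    (F := fun p : ℕ × ℕ => ‖t‖ ^ p.1 / p.1.factorial *
        (‖s‖ ^ p.2 / p.2.factorial * gh 1 (p.2 + a) (p.1 + b) ‖x‖ ‖y‖))
    (G := fun q => ‖t‖ ^ q / q.factorial * (NormedSpace.exp (‖s‖ * ‖x‖) *
      gh 1 a (q + b) ‖x‖ (‖y‖ + 1 * ‖s‖)))
    (g := fun q => t ^ q / q.factorial * (NormedSpace.exp (s * x) *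
      gh ε a (q + b) x (y + ε * s)))
    (fun p => ?_)
    (fun q => (hasSum_gh_left 1 ‖s‖ ‖x‖ ‖y‖ (q + b) a).mul_left _) ?_
    (fun q => (hasSum_gh_left ε s x y (q + b) a).mul_left _) ?_
  · simp only [norm_mul, norm_div, norm_pow, RCLike.norm_natCast]
    gcongr
    exact norm_gh_le ε hε _ _ _ _
  · refine ((hasSum_gh_right 1 ‖t‖ ‖x‖ (‖y‖ + 1 * ‖s‖) a b).mul_left
      (NormedSpace.exp (‖s‖ * ‖x‖))).summable.congr fun q => ?_
    ring
  · exact hasSum_of_eq ((hasSum_gh_right ε t x (y + ε * s) a b).mul_left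
      (NormedSpace.exp (s * x))) (fun q => by ring) (by ring)

/-- The sum over `l = i + j` for fixed `j`, by the negative binomial series. -/
theorem hasSum_laguerre_inner {𝕜 : Type*} [RCLike 𝕜] (s c : 𝕜) (hs : ‖s‖ < 1) (j : ℕ) :
    HasSum (fun i : ℕ => s ^ (i + j) * (((i + j).choose j : 𝕜) * (c ^ j / j.factorial)))
      ((1 - s)⁻¹ * ((c * s / (1 - s)) ^ j / j.factorial)) := by
  have h1 : 1 - s ≠ 0 := by
    rw [sub_ne_zero]; rintro rfl; simp at hs
  refine hasSum_of_eq ((hasSum_choose_mul_geometric_of_norm_lt_one j hs).mul_left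
    (s ^ j * (c ^ j / j.factorial))) (fun i => by ring) ?_
  rw [div_pow, mul_pow]
  field_simp
  ring

theorem hasSum_laguerre_outer {𝕜 : Type*} [RCLike 𝕜] (s c : 𝕜) :
    HasSum (fun j : ℕ => (1 - s)⁻¹ * ((c * s / (1 - s)) ^ j / j.factorial))
      ((1 - s)⁻¹ * NormedSpace.exp (c * s / (1 - s))) :=
  (NormedSpace.expSeries_div_hasSum_exp (c * s / (1 - s))).mul_left (1 - s)⁻¹

/-- The generating function of the Laguerre polynomials `∑ⱼ C(l, j) cʲ / j!`, obtained by summing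
first over `l ≥ j` with the negative binomial series. -/
theorem hasSum_laguerre {𝕜 : Type*} [RCLike 𝕜] (s c : 𝕜) (hs : ‖s‖ < 1) :
    HasSum (fun l : ℕ => s ^ l * ∑ j ∈ range (l + 1), (l.choose j : 𝕜) * (c ^ j / j.factorial))
      ((1 - s)⁻¹ * NormedSpace.exp (c * s / (1 - s))) := by
  have hs' : ‖(‖s‖)‖ < 1 := by simpa using hs
  have h := hasSum_prod_of_bound
    (f := fun p : ℕ × ℕ => s ^ (p.2 + p.1) *
      (((p.2 + p.1).choose p.1 : 𝕜) * (c ^ p.1 / p.1.factorial)))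
    (F := fun p : ℕ × ℕ => ‖s‖ ^ (p.2 + p.1) *
      (((p.2 + p.1).choose p.1 : ℝ) * (‖c‖ ^ p.1 / p.1.factorial)))
    (fun p => by simp) (hasSum_laguerre_inner ‖s‖ ‖c‖ hs') (hasSum_laguerre_outer ‖s‖ ‖c‖).summable
    (hasSum_laguerre_inner s c hs) (hasSum_laguerre_outer s c)
  -- Terms outside the image of `(j, i) ↦ (i + j, j)`, that is with `l < j`, vanish.
  have hinj : Function.Injective (fun p : ℕ × ℕ => (p.2 + p.1, p.1)) := by
    rintro ⟨a, b⟩ ⟨a', b'⟩ h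
    simp only [Prod.mk.injEq] at h ⊢
    omega
  have h' : HasSum (fun p : ℕ × ℕ => s ^ p.1 * ((p.1.choose p.2 : 𝕜) *
      (c ^ p.2 / p.2.factorial))) ((1 - s)⁻¹ * NormedSpace.exp (c * s / (1 - s))) := by
    refine (hinj.hasSum_iff ?_).1 h
    rintro ⟨l, j⟩ hlj
    have : l < j := by
      by_contra! hle
      exact hlj ⟨(j, l - j), by simp [Nat.sub_add_cancel hle]⟩
    simp [Nat.choose_eq_zero_of_lt this]
  refine h'.prod_fiberwise fun l => ?_
  rw [Finset.mul_sum]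
  refine hasSum_sum_of_ne_finset_zero fun j hj => ?_
  rw [Finset.mem_range, not_lt] at hj
  simp [Nat.choose_eq_zero_of_lt (Nat.lt_of_succ_le hj)]

/-- Diagonal Hermite polynomials are Laguerre polynomials in the product `x y`. -/
theorem gh_diag {𝕜 : Type*} [RCLike 𝕜] (ε : 𝕜) (hε : ε * ε = 1) (l : ℕ) (x y : 𝕜) :
    ε ^ l / l.factorial * gh ε l l x y =
      ∑ j ∈ range (l + 1), (l.choose j : 𝕜) * ((ε * (x * y)) ^ j / j.factorial) := by
  rw [gh, ← Finset.sum_range_reflect, Finset.mul_sum]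
  refine Finset.sum_congr rfl fun j hj => ?_
  have hj : j ≤ l := by simpa [Nat.lt_succ_iff] using hj
  obtain ⟨i, rfl⟩ := Nat.exists_eq_add_of_le hj
  rw [show j + i + 1 - 1 - j = i by omega, show j + i - i = j by omega]
  have e1 : (j + i).choose i = (j + i).choose j := Nat.choose_symm_add.symm
  have e2 : (((j + i).choose j : ℕ) : 𝕜) * j.factorial * i.factorial = (j + i).factorial := by
    rw [← e1]
    exact_mod_cast Nat.add_choose_mul_factorial_mul_factorial j i
  have e3 : ε ^ (j + i) * ε ^ i = ε ^ j := by
    rw [pow_add, mul_assoc, ← mul_pow, hε, one_pow, mul_one]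
  have f1 : (j.factorial : 𝕜) ≠ 0 := by exact_mod_cast j.factorial_ne_zero
  have f2 : ((j + i).factorial : 𝕜) ≠ 0 := by exact_mod_cast (j + i).factorial_ne_zero
  rw [e1, mul_pow, mul_pow, ← e3]
  field_simp
  rw [← e2]
  ring

theorem hasSum_gh_diag {𝕜 : Type*} [RCLike 𝕜] (ε : 𝕜) (hε : ε * ε = 1) (s x y : 𝕜)
    (hs : ‖s‖ < 1) :
    HasSum (fun l : ℕ => s ^ l * (ε ^ l / l.factorial * gh ε l l x y))
      ((1 - s)⁻¹ * NormedSpace.exp (ε * (x * y) * s / (1 - s))) := by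
  simp only [gh_diag ε hε]
  exact hasSum_laguerre s _ hs

/-- The Mehler formula for the two-variable Hermite polynomials. Writing out `H_{m,n}(u₁, u₂)` as a
sum over `l` and setting `m = p + l`, `n = q + l` gives a triple series; `hf` sums it over `(q, p)`
for fixed `l`, `hg` sums the result over `l`, and `hF`, `hG` do the same for the majorant. -/
theorem hasSum_mehler (t : ℂ) (ht : ‖t‖ < 1) (z₁ z₂ u₁ u₂ : ℂ) :
    HasSum (fun p : ℕ × ℕ => t ^ (p.1 + p.2) / (p.1.factorial * p.2.factorial) *
        (hermite2 p.1 p.2 z₁ z₂ * hermite2 p.1 p.2 u₁ u₂))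
      ((1 - t ^ 2)⁻¹ * Complex.exp ((t * (z₁ * u₁ + z₂ * u₂) - t ^ 2 * (z₁ * z₂ + u₁ * u₂))
        / (1 - t ^ 2))) := by
  have ht2 : ‖t ^ 2‖ < 1 := by
    rw [norm_pow]; exact pow_lt_one₀ (norm_nonneg _) ht two_ne_zero
  have hne : 1 - t ^ 2 ≠ 0 := by
    rw [sub_ne_zero]; intro h; rw [← h] at ht2; simp at ht2
  have hε : ‖(-1 : ℂ)‖ = 1 := by simp
  have hF : ∀ l : ℕ, HasSum (fun p : ℕ × ℕ => (‖t‖ ^ 2) ^ l * (1 ^ l / l.factorial) *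
      (‖t * u₂‖ ^ p.1 / p.1.factorial * (‖t * u₁‖ ^ p.2 / p.2.factorial *
        gh 1 (p.2 + l) (p.1 + l) ‖z₁‖ ‖z₂‖)))
      ((‖t‖ ^ 2) ^ l * (1 ^ l / l.factorial) * (NormedSpace.exp (‖t * u₁‖ * ‖z₁‖) *
        (NormedSpace.exp (‖t * u₂‖ * (‖z₂‖ + 1 * ‖t * u₁‖)) *
          gh 1 l l (‖z₁‖ + 1 * ‖t * u₂‖) (‖z₂‖ + 1 * ‖t * u₁‖)))) := fun l =>
    (hasSum_gh_both (1 : ℝ) norm_one ‖t * u₁‖ ‖t * u₂‖ ‖z₁‖ ‖z₂‖ l l).mul_left _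
  have hG : Summable fun l : ℕ =>
      (‖t‖ ^ 2) ^ l * (1 ^ l / l.factorial) * (NormedSpace.exp (‖t * u₁‖ * ‖z₁‖) *
        (NormedSpace.exp (‖t * u₂‖ * (‖z₂‖ + 1 * ‖t * u₁‖)) *
          gh 1 l l (‖z₁‖ + 1 * ‖t * u₂‖) (‖z₂‖ + 1 * ‖t * u₁‖))) := by
    refine ((hasSum_gh_diag (1 : ℝ) (one_mul 1) (‖t‖ ^ 2) (‖z₁‖ + 1 * ‖t * u₂‖)
      (‖z₂‖ + 1 * ‖t * u₁‖) (by simpa using ht2)).mul_left (NormedSpace.exp (‖t * u₁‖ * ‖z₁‖) *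
        NormedSpace.exp (‖t * u₂‖ * (‖z₂‖ + 1 * ‖t * u₁‖)))).summable.congr fun l => ?_
    ring
  have hf : ∀ l : ℕ, HasSum (fun p : ℕ × ℕ => (t ^ 2) ^ l * ((-1) ^ l / l.factorial) *
      ((t * u₂) ^ p.1 / p.1.factorial * ((t * u₁) ^ p.2 / p.2.factorial *
        gh (-1) (p.2 + l) (p.1 + l) z₁ z₂)))
      ((t ^ 2) ^ l * ((-1) ^ l / l.factorial) * (NormedSpace.exp (t * u₁ * z₁) *
        (NormedSpace.exp (t * u₂ * (z₂ + -1 * (t * u₁))) *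
          gh (-1) l l (z₁ + -1 * (t * u₂)) (z₂ + -1 * (t * u₁))))) := fun l =>
    (hasSum_gh_both (-1 : ℂ) hε (t * u₁) (t * u₂) z₁ z₂ l l).mul_left _
  have hg : HasSum (fun l : ℕ =>
      (t ^ 2) ^ l * ((-1) ^ l / l.factorial) * (NormedSpace.exp (t * u₁ * z₁) *
        (NormedSpace.exp (t * u₂ * (z₂ + -1 * (t * u₁))) *
          gh (-1) l l (z₁ + -1 * (t * u₂)) (z₂ + -1 * (t * u₁)))))
      ((1 - t ^ 2)⁻¹ * Complex.exp ((t * (z₁ * u₁ + z₂ * u₂) - t ^ 2 * (z₁ * z₂ + u₁ * u₂))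
        / (1 - t ^ 2))) := by
    refine hasSum_of_eq ((hasSum_gh_diag (-1 : ℂ) (by norm_num) (t ^ 2) (z₁ + -1 * (t * u₂))
      (z₂ + -1 * (t * u₁)) ht2).mul_left (NormedSpace.exp (t * u₁ * z₁) *
        NormedSpace.exp (t * u₂ * (z₂ + -1 * (t * u₁))))) (fun l => by ring) ?_
    rw [← Complex.exp_eq_exp_ℂ, mul_left_comm, ← Complex.exp_add, ← Complex.exp_add]
    congr 2
    field_simp
    ring
  have h := hasSum_prod_of_bound
    (f := fun p : ℕ × ℕ × ℕ => (t ^ 2) ^ p.1 * ((-1) ^ p.1 / p.1.factorial) *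
      ((t * u₂) ^ p.2.1 / p.2.1.factorial * ((t * u₁) ^ p.2.2 / p.2.2.factorial *
        gh (-1) (p.2.2 + p.1) (p.2.1 + p.1) z₁ z₂)))
    (F := fun p : ℕ × ℕ × ℕ => (‖t‖ ^ 2) ^ p.1 * (1 ^ p.1 / p.1.factorial) *
      (‖t * u₂‖ ^ p.2.1 / p.2.1.factorial * (‖t * u₁‖ ^ p.2.2 / p.2.2.factorial *
        gh 1 (p.2.2 + p.1) (p.2.1 + p.1) ‖z₁‖ ‖z₂‖)))
    (fun p => by
      have := norm_gh_le (-1 : ℂ) hε (p.2.2 + p.1) (p.2.1 + p.1) z₁ z₂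
      rw [norm_mul, norm_mul, norm_mul, norm_mul, norm_div, norm_div, norm_div,
        norm_pow (t ^ 2), norm_pow t, norm_pow (-1 : ℂ), norm_pow (t * u₂), norm_pow (t * u₁),
        Complex.norm_natCast, Complex.norm_natCast, Complex.norm_natCast, hε]
      gcongr)
    hF hG hf hg
  -- Terms outside the image of `(l, q, p) ↦ ((p + l, q + l), l)` vanish.
  have hinj : Function.Injective
      (fun p : ℕ × ℕ × ℕ => ((p.2.2 + p.1, p.2.1 + p.1), p.1)) := by
    rintro ⟨a, b, c⟩ ⟨a', b', c'⟩ h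
    simp only [Prod.mk.injEq] at h ⊢
    omega
  have h' : HasSum (fun p : (ℕ × ℕ) × ℕ =>
      t ^ (p.1.1 + p.1.2) / (p.1.1.factorial * p.1.2.factorial) *
        (hermite2 p.1.1 p.1.2 z₁ z₂ *
          ((p.1.1.choose p.2 : ℂ) * (p.1.2.choose p.2 : ℂ) * (-1) ^ p.2 *
            (p.2.factorial : ℂ) * u₁ ^ (p.1.1 - p.2) * u₂ ^ (p.1.2 - p.2))))
      ((1 - t ^ 2)⁻¹ * Complex.exp ((t * (z₁ * u₁ + z₂ * u₂) - t ^ 2 * (z₁ * z₂ + u₁ * u₂))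
        / (1 - t ^ 2))) := by
    refine (hinj.hasSum_iff ?_).1 (hasSum_of_eq h ?_ rfl)
    · rintro ⟨⟨m, n⟩, l⟩ hl
      have : m < l ∨ n < l := by
        by_contra! hle
        exact hl ⟨(l, n - l, m - l),
          by simp [Nat.sub_add_cancel hle.1, Nat.sub_add_cancel hle.2]⟩
      rcases this with h | h <;> simp [Nat.choose_eq_zero_of_lt h]
    · rintro ⟨l, q, p⟩
      have e1 : (((p + l).choose l : ℕ) : ℂ) * p.factorial * l.factorial
          = (p + l).factorial := by
        exact_mod_cast Nat.add_choose_mul_factorial_mul_factorial p l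
      have e2 : (((q + l).choose l : ℕ) : ℂ) * q.factorial * l.factorial
          = (q + l).factorial := by
        exact_mod_cast Nat.add_choose_mul_factorial_mul_factorial q l
      have f : ∀ n : ℕ, (n.factorial : ℂ) ≠ 0 := fun n => by exact_mod_cast n.factorial_ne_zero
      have f1 := f p
      have f2 := f q
      have f3 := f l
      have f4 := f (p + l)
      have f5 := f (q + l)
      simp only [Function.comp, Nat.add_sub_cancel, hermite2_eq_gh]
      field_simp
      rw [← e1, ← e2]
      ring
  refine h'.prod_fiberwise fun p => ?_
  rw [hermite2_eq_gh p.1 p.2 u₁ u₂, gh, Finset.mul_sum, Finset.mul_sum]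
  refine hasSum_sum_of_ne_finset_zero fun l hl => ?_
  rw [Finset.mem_range, not_lt] at hl
  simp [Nat.choose_eq_zero_of_lt (Nat.lt_of_succ_le hl)]

theorem conj_hermiteFun (α : ℝ) (m n : ℕ) (w₁ w₂ : ℂ) :
    (starRingEnd ℂ) (hermiteFun α m n w₁ w₂) =
      hermiteFun α m n ((starRingEnd ℂ) w₁) ((starRingEnd ℂ) w₂) := by
  simp only [hermiteFun, hermite2, map_mul, Complex.conj_ofReal, ← Complex.exp_conj, map_sum,
    map_pow, map_natCast, map_neg, map_div₀, map_one, map_ofNat]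

/-- The square roots in the two normalizing constants combine, leaving the Mehler summand with
`t = (1 - α) / (1 + α)` times a constant independent of `m` and `n`. -/
theorem hermiteFun_mul_hermiteFun (α : ℝ) (hα₀ : 0 < α) (hα₁ : α < 1) (m n : ℕ)
    (z₁ z₂ u₁ u₂ : ℂ) :
    hermiteFun α m n z₁ z₂ * hermiteFun α m n u₁ u₂ =
      (((1 - α) ^ 2 / (4 * α) : ℝ) : ℂ) * Complex.exp (-(z₁ * z₂) / 2 + -(u₁ * u₂) / 2) *
        ((((1 - α) / (1 + α) : ℝ) : ℂ) ^ (m + n) / (m.factorial * n.factorial) *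
          (hermite2 m n z₁ z₂ * hermite2 m n u₁ u₂)) := by
  have hr : 0 ≤ (1 - α) / (1 + α) := div_nonneg (by linarith) (by linarith)
  have hsq : (((1 - α) / (2 * Real.sqrt α)) *
      ((1 - α) / (1 + α)) ^ (((m + n : ℕ) : ℝ) / 2) /
      Real.sqrt (Nat.factorial m * Nat.factorial n)) ^ 2 =
      (1 - α) ^ 2 / (4 * α) * (((1 - α) / (1 + α)) ^ (m + n) /
        (m.factorial * n.factorial)) := by
    rw [div_pow, mul_pow, div_pow, mul_pow, Real.sq_sqrt hα₀.le, Real.sq_sqrt (by positivity),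
      ← Real.rpow_natCast (_ ^ _) 2, ← Real.rpow_mul hr, Nat.cast_ofNat,
      div_mul_cancel₀ _ (two_ne_zero' ℝ), Real.rpow_natCast]
    ring
  have hsq' : (((((1 - α) / (2 * Real.sqrt α)) *
      ((1 - α) / (1 + α)) ^ (((m + n : ℕ) : ℝ) / 2) /
      Real.sqrt (Nat.factorial m * Nat.factorial n) : ℝ) : ℂ)) ^ 2 =
      (((1 - α) ^ 2 / (4 * α) : ℝ) : ℂ) * ((((1 - α) / (1 + α) : ℝ) : ℂ) ^ (m + n) /
        (m.factorial * n.factorial)) := by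
    rw [← Complex.ofReal_pow, hsq]
    push_cast
    ring
  simp only [hermiteFun, Complex.exp_add]
  linear_combination (Complex.exp (-(z₁ * z₂) / 2) * hermite2 m n z₁ z₂ *
    (Complex.exp (-(u₁ * u₂) / 2) * hermite2 m n u₁ u₂)) * hsq'

theorem reproducing_kernel_formula (α : ℝ) (hα₀ : 0 < α) (hα₁ : α < 1)
    (z₁ z₂ w₁ w₂ : ℂ) :
    HasSum
      (fun p : ℕ × ℕ =>
        hermiteFun α p.1 p.2 z₁ z₂ * (starRingEnd ℂ) (hermiteFun α p.1 p.2 w₁ w₂))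
      ((((1 - α ^ 2) ^ 2 / (16 * α ^ 2) : ℝ) : ℂ) *
        Complex.exp
          (-(((1 + α ^ 2) / (4 * α) : ℝ) : ℂ) *
              (z₁ * z₂ + (starRingEnd ℂ) w₁ * (starRingEnd ℂ) w₂) +
            (((1 - α ^ 2) / (4 * α) : ℝ) : ℂ) *
              (z₁ * (starRingEnd ℂ) w₁ + z₂ * (starRingEnd ℂ) w₂))) := by
  simp only [conj_hermiteFun, hermiteFun_mul_hermiteFun α hα₀ hα₁]
  have ht : ‖(((1 - α) / (1 + α) : ℝ) : ℂ)‖ < 1 := by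
    rw [Complex.norm_real, Real.norm_of_nonneg (div_nonneg (by linarith) (by linarith)),
      div_lt_one (by linarith)]
    linarith
  refine hasSum_of_eq ((hasSum_mehler _ ht z₁ z₂ ((starRingEnd ℂ) w₁)
    ((starRingEnd ℂ) w₂)).mul_left _) (fun p => rfl) ?_
  have hα : (α : ℂ) ≠ 0 := by exact_mod_cast hα₀.ne'
  have hα' : (1 + α : ℂ) ≠ 0 := by
    have : (1 + α : ℝ) ≠ 0 := by linarith
    exact_mod_cast this
  have e : (1 - (((1 - α) / (1 + α) : ℝ) : ℂ) ^ 2) = 4 * α / (1 + α) ^ 2 := by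
    push_cast
    field_simp
    ring
  rw [e, mul_mul_mul_comm, ← Complex.exp_add]
  congr 1
  · push_cast
    field_simp
    ring
  · congr 1
    push_cast
    field_simp
    ring
end
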